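/- arXiv:math/9211207 — 2 statements merged into one kernel-verified Lean document; each statement's English description precedes it below -/
import Mathlib

section
/- Let X and Y be quasi-Banach spaces such that the dual space X* has cotype 2 and Y has cotype 2. Then there is a constant C (depending only on X and Y) such that every strongly approximable bounded linear operator u : X → Y satisfies γ₂(u) ≤ C‖u‖; in particular every such operator factors through a Hilbert space. -/
open scoped ENNReal NNReal BigOperators

universe uX uY uZ uW uE uO uG uV

/-- The sign `±1` attached to a Boolean. -/
noncomputable def rsign (b : Bool) : ℝ := if b then 1 else -1

section Defs

variable {X : Type uX} {Y : Type uY} {Z : Type uZ} {W : Type uW}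
  [AddCommGroup X] [Module ℝ X] [AddCommGroup Y] [Module ℝ Y]
  [AddCommGroup Z] [Module ℝ Z] [AddCommGroup W] [Module ℝ W]

/-- A quasi-norm on a real vector space. -/
structure QuasiNormOn (X : Type uX) [AddCommGroup X] [Module ℝ X] : Type uX where
  q : X → ℝ
  nonneg : ∀ x, 0 ≤ q x
  eq_zero_iff : ∀ x, q x = 0 ↔ x = 0
  smul_eq : ∀ (a : ℝ) (x : X), q (a • x) = |a| * q x
  k : ℝ
  one_le_k : 1 ≤ k
  tri : ∀ x y, q (x + y) ≤ k * (q x + q y)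

/-- Completeness of a quasi-normed space, via Cauchy sequences for the quasi-norm
(the induced topology is metrizable, so sequences suffice). -/
def CauchyComplete (q : X → ℝ) : Prop :=
  ∀ f : ℕ → X, (∀ ε > (0:ℝ), ∃ N, ∀ m ≥ N, ∀ n ≥ N, q (f m - f n) < ε) →
    ∃ x, ∀ ε > (0:ℝ), ∃ N, ∀ n ≥ N, q (f n - x) < ε

/-- `u` is bounded by `M` as an operator `(X,qX) → (Y,qY)`. -/
def OpBoundedBy (qX : X → ℝ) (qY : Y → ℝ) (u : X →ₗ[ℝ] Y) (M : ℝ) : Prop :=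
  ∀ x, qY (u x) ≤ M * qX x

/-- `u` is a bounded operator `(X,qX) → (Y,qY)`. -/
def IsBddOp (qX : X → ℝ) (qY : Y → ℝ) (u : X →ₗ[ℝ] Y) : Prop :=
  ∃ M, 0 ≤ M ∧ OpBoundedBy qX qY u M

/-- The operator (quasi-)norm of `u : (X,qX) → (Y,qY)`. -/
noncomputable def opQNorm (qX : X → ℝ) (qY : Y → ℝ) (u : X →ₗ[ℝ] Y) : ℝ :=
  sInf {M | 0 ≤ M ∧ OpBoundedBy qX qY u M}

/-- The `L_p`-average of `q (∑ᵢ εᵢ xᵢ)` over all choices of signs `εᵢ = ±1`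
(the normalized counting measure on `D_n = {-1,1}ⁿ`). -/
noncomputable def radAvg (q : X → ℝ) (p : ℝ) {n : ℕ} (x : Fin n → X) : ℝ :=
  (((2:ℝ) ^ n)⁻¹ * ∑ ε : Fin n → Bool, q (∑ i, rsign (ε i) • x i) ^ p) ^ (1 / p)

/-- `(X,q)` has cotype `p` with constant at most `C`. -/
def CotypeConstLe (q : X → ℝ) (p C : ℝ) : Prop :=
  ∀ (n : ℕ) (x : Fin n → X), (∑ i, q (x i) ^ p) ^ (1 / p) ≤ C * radAvg q p x

/-- `(X,q)` has cotype `p`. -/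
def HasCotype (q : X → ℝ) (p : ℝ) : Prop := ∃ C, 0 < C ∧ CotypeConstLe q p C

/-- `(X,q)` has type 2 constant at most `C`. -/
def Type2ConstLe (q : X → ℝ) (C : ℝ) : Prop :=
  ∀ (n : ℕ) (x : Fin n → X),
    radAvg q (2:ℝ) x ≤ C * (∑ i, q (x i) ^ (2:ℝ)) ^ (1/2 : ℝ)

/-- A linear functional bounded with respect to the quasi-norm `q`. -/
def DualBdd (q : X → ℝ) (f : X →ₗ[ℝ] ℝ) : Prop := ∃ M, 0 ≤ M ∧ ∀ x, |f x| ≤ M * q x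

/-- The dual norm of a linear functional on `(X,q)`. -/
noncomputable def dualNorm (q : X → ℝ) (f : X →ₗ[ℝ] ℝ) : ℝ :=
  sInf {M | 0 ≤ M ∧ ∀ x, |f x| ≤ M * q x}

/-- The dual space `X*` of `(X,q)` has cotype 2 (as a Banach space with the dual norm). -/
def DualHasCotype2 (q : X → ℝ) : Prop :=
  ∃ C, 0 < C ∧ ∀ (n : ℕ) (f : Fin n → (X →ₗ[ℝ] ℝ)), (∀ i, DualBdd q (f i)) →
    (∑ i, dualNorm q (f i) ^ (2:ℝ)) ^ (1/2:ℝ) ≤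
      C * ((((2:ℝ) ^ n)⁻¹ *
        ∑ ε : Fin n → Bool, dualNorm q (∑ i, rsign (ε i) • f i) ^ (2:ℝ)) ^ (1/2:ℝ))

/-- `γ₂(u) ≤ c` : `u` factors through a Hilbert space (every real Hilbert space being
isometric to some `ℓ²(ι)`) with product of the two operator norms at most `c`. -/
def Gamma2Le (qX : X → ℝ) (qY : Y → ℝ) (u : X →ₗ[ℝ] Y) (c : ℝ) : Prop :=
  ∃ (ι : Type uX) (w : X →ₗ[ℝ] lp (fun _ : ι => ℝ) 2)
    (v : lp (fun _ : ι => ℝ) 2 →ₗ[ℝ] Y) (Cw Cv : ℝ),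
    0 ≤ Cw ∧ 0 ≤ Cv ∧ (∀ x, ‖w x‖ ≤ Cw * qX x) ∧ (∀ h, qY (v h) ≤ Cv * ‖h‖) ∧
    (∀ x, v (w x) = u x) ∧ Cv * Cw ≤ c

/-- `S` is closed under pointwise limits of bounded nets (equivalently, filters). -/
def NetClosed (qX : X → ℝ) (qY : Y → ℝ) (S : Set (X →ₗ[ℝ] Y)) : Prop :=
  ∀ l : Filter (X →ₗ[ℝ] Y), l.NeBot →
    (∀ᶠ w in l, w ∈ S) →
    (∃ B, ∀ᶠ w in l, OpBoundedBy qX qY w B) →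
    ∀ u : X →ₗ[ℝ] Y,
      (∀ x, Filter.Tendsto (fun w : X →ₗ[ℝ] Y => qY (w x - u x)) l (nhds 0)) → u ∈ S

/-- `u` belongs to the smallest subspace of `L(X,Y)` which contains the finite-rank
operators and is closed under pointwise convergence of bounded nets. -/
def StronglyApproximable (qX : X → ℝ) (qY : Y → ℝ) (u : X →ₗ[ℝ] Y) : Prop :=
  ∀ S : Set (X →ₗ[ℝ] Y),
    (∀ w ∈ S, IsBddOp qX qY w) →
    (∀ w w', w ∈ S → w' ∈ S → w + w' ∈ S) →
    (∀ (a : ℝ) (w : X →ₗ[ℝ] Y), w ∈ S → a • w ∈ S) →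
    (∀ w : X →ₗ[ℝ] Y, IsBddOp qX qY w → Module.Finite ℝ (LinearMap.range w) → w ∈ S) →
    NetClosed qX qY S → u ∈ S

end Defs

/-!
A bounded operator `u` into a complete space factors through a Hilbert space as soon as it is
dominated by a Hilbertian seminorm. By a Hahn–Banach argument, `u` is so dominated with constant `c`
if and only if `∑ q(u yᵢ)² ≤ c² ∑ q(xᵢ)²` whenever `∑ xᵢ ⊗ xᵢ = ∑ yᵢ ⊗ yᵢ`, and by the rotation
invariance of Gaussian vectors (Kwapień) this holds when `u` has type 2 and `Y` has cotype 2.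

Cotype 2 of `X*` gives, by duality, for every family `xᵢ` a function on the cube with first Walsh
coefficients `xᵢ` which is controlled in `L²` of the Banach envelope of `X`. If `u` is dominated
with some constant `c`, then Maurey sampling bounds `u` on the envelope by a multiple of
`A_N ‖u‖ + c / √N`. The Rademacher projection need not be bounded on `L²(X)`, but the odd part of
the noise operator with parameter `τ` replaces it up to an error `τ² c`. For suitable `N` and `τ`
the best constant therefore satisfies `c ≤ K ‖u‖ + c / 2`, that is `c ≤ 2 K ‖u‖`. This bound depends
only on `X` and `Y`, so it survives pointwise limits of bounded nets, while operators of finite rank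
are trivially dominated.
-/

open scoped TensorProduct

namespace QuasiNormOn

variable {X : Type*} [AddCommGroup X] [Module ℝ X] (Q : QuasiNormOn X)

lemma k_pos : 0 < Q.k := zero_lt_one.trans_le Q.one_le_k

lemma map_zero : Q.q 0 = 0 := (Q.eq_zero_iff 0).2 rfl

lemma map_neg (x : X) : Q.q (-x) = Q.q x := by
  simpa using Q.smul_eq (-1) x

lemma map_sub_comm (x y : X) : Q.q (x - y) = Q.q (y - x) := by
  rw [← neg_sub, map_neg]

lemma map_smul_sq (a : ℝ) (x : X) : Q.q (a • x) ^ 2 = a ^ 2 * Q.q x ^ 2 := by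
  rw [Q.smul_eq, mul_pow, sq_abs]

lemma sq_add_le (x y : X) : Q.q (x + y) ^ 2 ≤ 2 * Q.k ^ 2 * (Q.q x ^ 2 + Q.q y ^ 2) := by
  have hxy := pow_le_pow_left₀ (Q.nonneg _) (Q.tri x y) 2
  nlinarith [mul_nonneg (sq_nonneg Q.k) (sq_nonneg (Q.q x - Q.q y))]

lemma map_sum_le {ι : Type*} (s : Finset ι) (x : ι → X) :
    Q.q (∑ i ∈ s, x i) ≤ Q.k ^ s.card * ∑ i ∈ s, Q.q (x i) := by
  classical
  induction s using Finset.induction_on with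
  | empty => simp [map_zero]
  | insert a s ha ih =>
    rw [Finset.sum_insert ha, Finset.sum_insert ha, Finset.card_insert_of_notMem ha]
    have hxa : Q.q (x a) ≤ Q.k ^ s.card * Q.q (x a) :=
      le_mul_of_one_le_left (Q.nonneg _) (one_le_pow₀ Q.one_le_k)
    calc Q.q (x a + ∑ i ∈ s, x i)
        ≤ Q.k * (Q.q (x a) + Q.q (∑ i ∈ s, x i)) := Q.tri _ _
      _ ≤ Q.k * (Q.k ^ s.card * Q.q (x a) + Q.k ^ s.card * ∑ i ∈ s, Q.q (x i)) := by
          gcongr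
          exact Q.k_pos.le
      _ = Q.k ^ (s.card + 1) * (Q.q (x a) + ∑ i ∈ s, Q.q (x i)) := by ring

end QuasiNormOn

section BestConstant

variable {α : Type*} {a b : α → ℝ}

lemma sInf_bound_mem (h : ∃ M, 0 ≤ M ∧ ∀ x, a x ≤ M * b x) :
    sInf {M | 0 ≤ M ∧ ∀ x, a x ≤ M * b x} ∈ {M | 0 ≤ M ∧ ∀ x, a x ≤ M * b x} := by
  refine IsClosed.csInf_mem ?_ h ⟨0, fun M hM => hM.1⟩
  simp only [Set.ofPred_and, Set.ofPred_forall]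
  exact isClosed_Ici.inter
    (isClosed_iInter fun x => isClosed_le continuous_const (continuous_id.mul continuous_const))

end BestConstant

section Sandwich

variable {X : Type*} [AddCommGroup X] [Module ℝ X]

lemma exists_tmul_self_sub (T : X ⊗[ℝ] X) : ∃ (n : ℕ) (x y : Fin n → X),
    T + TensorProduct.comm ℝ X X T =
      (2 : ℝ) • (∑ i, x i ⊗ₜ[ℝ] x i - ∑ i, y i ⊗ₜ[ℝ] y i) := by
  induction T using TensorProduct.induction_on with
  | zero => exact ⟨0, 0, 0, by simp⟩
  | tmul a b =>
    refine ⟨1, fun _ => (1 / 2 : ℝ) • (a + b), fun _ => (1 / 2 : ℝ) • (a - b), ?_⟩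
    simp only [TensorProduct.comm_tmul, Finset.univ_unique, Finset.sum_const,
      Finset.card_singleton, one_smul, TensorProduct.tmul_smul, ← TensorProduct.smul_tmul',
      TensorProduct.add_tmul, TensorProduct.tmul_add, TensorProduct.sub_tmul,
      TensorProduct.tmul_sub]
    module
  | add T T' hT hT' =>
    obtain ⟨m, x, y, h⟩ := hT
    obtain ⟨n, x', y', h'⟩ := hT'
    refine ⟨m + n, Fin.append x x', Fin.append y y', ?_⟩
    simp only [Fin.sum_univ_add, Fin.append_left, Fin.append_right, map_add]
    linear_combination (norm := module) h + h'

/-- The convex cone of pairs `(T, t)` such that the symmetric part of `T` has a representation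
`∑ xᵢ ⊗ xᵢ - ∑ yᵢ ⊗ yᵢ` with `∑ g(xᵢ) - ∑ f(yᵢ) ≤ t`. A linear functional on `X ⊗ X` is (minus) a
bilinear form between `f` and `g` on the diagonal when, extended by `(0, t) ↦ t`, it is nonnegative
on this cone. -/
def sandwichCone (f g : X → ℝ) (hf : ∀ (a : ℝ) x, f (a • x) = a ^ 2 * f x)
    (hg : ∀ (a : ℝ) x, g (a • x) = a ^ 2 * g x) : PointedCone ℝ ((X ⊗[ℝ] X) × ℝ) where
  carrier := {p | ∃ (n : ℕ) (x y : Fin n → X),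
    p.1 + TensorProduct.comm ℝ X X p.1 =
      (2 : ℝ) • (∑ i, x i ⊗ₜ[ℝ] x i - ∑ i, y i ⊗ₜ[ℝ] y i) ∧
    ∑ i, g (x i) - ∑ i, f (y i) ≤ p.2}
  zero_mem' := ⟨0, 0, 0, by simp, by simp⟩
  add_mem' := by
    rintro p p' ⟨m, x, y, h, ht⟩ ⟨n, x', y', h', ht'⟩
    refine ⟨m + n, Fin.append x x', Fin.append y y', ?_, ?_⟩
    · simp only [Fin.sum_univ_add, Fin.append_left, Fin.append_right, Prod.fst_add, map_add]
      linear_combination (norm := module) h + h'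
    · simp only [Fin.sum_univ_add, Fin.append_left, Fin.append_right, Prod.snd_add]
      linarith
  smul_mem' := by
    rintro ⟨a, ha⟩ p ⟨n, x, y, h, ht⟩
    refine ⟨n, fun i => √a • x i, fun i => √a • y i, ?_, ?_⟩
    · simp only [Nonneg.mk_smul, Prod.smul_fst, map_smul, TensorProduct.tmul_smul,
        ← TensorProduct.smul_tmul', smul_smul, Real.mul_self_sqrt ha, ← Finset.smul_sum]
      linear_combination (norm := module) a • h
    · simp only [hf, hg, Real.sq_sqrt ha, ← Finset.mul_sum, Nonneg.mk_smul, Prod.smul_snd,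
        smul_eq_mul, ← mul_sub]
      exact mul_le_mul_of_nonneg_left ht ha

lemma exists_dual_nonneg_on_sandwichCone {f g : X → ℝ}
    (hf : ∀ (a : ℝ) x, f (a • x) = a ^ 2 * f x) (hg : ∀ (a : ℝ) x, g (a • x) = a ^ 2 * g x)
    (h : ∀ (n : ℕ) (x y : Fin n → X), ∑ i, x i ⊗ₜ[ℝ] x i = ∑ i, y i ⊗ₜ[ℝ] y i →
      ∑ i, f (y i) ≤ ∑ i, g (x i)) :
    ∃ G : (X ⊗[ℝ] X) × ℝ →ₗ[ℝ] ℝ, (∀ p ∈ sandwichCone f g hf hg, 0 ≤ G p) ∧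
      ∀ T t, G (T, t) = G (T, 0) + t := by
  let height : (X ⊗[ℝ] X) × ℝ →ₗ.[ℝ] ℝ :=
    ⟨Submodule.prod ⊥ ⊤, LinearMap.snd ℝ _ _ ∘ₗ Submodule.subtype _⟩
  obtain ⟨G, hG, hGnonneg⟩ := riesz_extension (sandwichCone f g hf hg) height
    (by
      rintro ⟨⟨T, t⟩, hT, _⟩ ⟨n, x, y, hxy, ht⟩
      obtain rfl : T = 0 := hT
      have hxy' := h n x y <| sub_eq_zero.1 <|
        (smul_eq_zero_iff_right (two_ne_zero (α := ℝ))).1 (by simpa using hxy.symm)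
      exact (sub_nonneg.2 hxy').trans ht)
    (by
      rintro ⟨T, t⟩
      obtain ⟨n, x, y, hxy⟩ := exists_tmul_self_sub T
      exact ⟨⟨(0, ∑ i, g (x i) - ∑ i, f (y i) - t), by simp [height]⟩,
        n, x, y, by simpa using hxy, by simp⟩)
  refine ⟨G, hGnonneg, fun T t => ?_⟩
  have hGt : G (0, t) = t := hG ⟨(0, t), by simp [height]⟩
  simpa [hGt] using map_add G (T, 0) (0, t)

lemma exists_symm_bilinForm_between {f g : X → ℝ} (hf : ∀ (a : ℝ) x, f (a • x) = a ^ 2 * f x)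
    (hg : ∀ (a : ℝ) x, g (a • x) = a ^ 2 * g x)
    (h : ∀ (n : ℕ) (x y : Fin n → X), ∑ i, x i ⊗ₜ[ℝ] x i = ∑ i, y i ⊗ₜ[ℝ] y i →
      ∑ i, f (y i) ≤ ∑ i, g (x i)) :
    ∃ B : LinearMap.BilinForm ℝ X, B.IsSymm ∧ (∀ x, f x ≤ B x x) ∧ ∀ x, B x x ≤ g x := by
  have hf0 : f 0 = 0 := by simpa using hf 0 0
  have hg0 : g 0 = 0 := by simpa using hg 0 0
  obtain ⟨G, hGnonneg, hGsplit⟩ := exists_dual_nonneg_on_sandwichCone hf hg h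
  let B : LinearMap.BilinForm ℝ X := TensorProduct.curry (-(G ∘ₗ LinearMap.inl ℝ _ _))
  have hB (x y : X) : B x y = -G (x ⊗ₜ y, 0) := rfl
  have hBle (x y : X) : B x y ≤ B y x := by
    have hmem : (x ⊗ₜ[ℝ] y - y ⊗ₜ[ℝ] x, (0 : ℝ)) ∈ sandwichCone f g hf hg :=
      ⟨0, 0, 0, by simp, by simp⟩
    have := hGnonneg _ hmem
    rw [show (x ⊗ₜ[ℝ] y - y ⊗ₜ[ℝ] x, (0 : ℝ)) = (x ⊗ₜ y, 0) - (y ⊗ₜ x, 0) by simp, map_sub] at this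
    rw [hB, hB]
    linarith
  refine ⟨B, ⟨fun x y => le_antisymm (hBle x y) (hBle y x)⟩, fun x => ?_, fun x => ?_⟩
  · have := hGnonneg (-(x ⊗ₜ x), -f x) ⟨1, 0, fun _ => x, by simp [two_smul], by simp [hg0]⟩
    rw [hGsplit, show (-(x ⊗ₜ[ℝ] x), (0 : ℝ)) = -(x ⊗ₜ x, 0) by simp, map_neg] at this
    rw [hB]
    linarith
  · have := hGnonneg (x ⊗ₜ x, g x) ⟨1, fun _ => x, 0, by simp [two_smul], by simp [hf0]⟩
    rw [hGsplit] at this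
    rw [hB]
    linarith

end Sandwich

section HilbertDominated

variable {X Y : Type*} [AddCommGroup X] [Module ℝ X] [AddCommGroup Y] [Module ℝ Y]
  {QX : QuasiNormOn X} {QY : QuasiNormOn Y} {u : X →ₗ[ℝ] Y} {c : ℝ}

/-- `u` is dominated by a Hilbertian seminorm of norm at most `c`; the seminorm is encoded by its
symmetric bilinear form, which is positive semidefinite by the lower estimate. -/
def HilbertDominated (QX : QuasiNormOn X) (QY : QuasiNormOn Y) (u : X →ₗ[ℝ] Y) (c : ℝ) : Prop :=
  ∃ B : LinearMap.BilinForm ℝ X, B.IsSymm ∧ (∀ x, QY.q (u x) ^ 2 ≤ B x x) ∧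
    ∀ x, B x x ≤ c ^ 2 * QX.q x ^ 2

lemma hilbertDominated_iff : HilbertDominated QX QY u c ↔ ∀ (n : ℕ) (x y : Fin n → X),
    ∑ i, x i ⊗ₜ[ℝ] x i = ∑ i, y i ⊗ₜ[ℝ] y i →
      ∑ i, QY.q (u (y i)) ^ 2 ≤ c ^ 2 * ∑ i, QX.q (x i) ^ 2 := by
  simp only [Finset.mul_sum]
  refine ⟨?_, fun h => exists_symm_bilinForm_between (fun a x => ?_) (fun a x => ?_) h⟩
  · rintro ⟨B, -, hlower, hupper⟩ n x y hxy
    have hB : ∑ i, B (x i) (x i) = ∑ i, B (y i) (y i) := by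
      simpa using congrArg (TensorProduct.lift B) hxy
    calc ∑ i, QY.q (u (y i)) ^ 2 ≤ ∑ i, B (y i) (y i) := Finset.sum_le_sum fun i _ => hlower _
      _ = ∑ i, B (x i) (x i) := hB.symm
      _ ≤ ∑ i, c ^ 2 * QX.q (x i) ^ 2 := Finset.sum_le_sum fun i _ => hupper _
  · rw [map_smul, QY.map_smul_sq]
  · rw [QX.map_smul_sq]
    ring

lemma isClosed_setOf_hilbertDominated : IsClosed {c | HilbertDominated QX QY u c} := by
  simp only [hilbertDominated_iff, Set.ofPred_forall]
  exact isClosed_iInter fun n => isClosed_iInter fun x => isClosed_iInter fun y =>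
    isClosed_iInter fun _ => isClosed_le continuous_const (by fun_prop)

end HilbertDominated

section ContinuousReplacement

variable {Y : Type*} [AddCommGroup Y] [Module ℝ Y]

lemma QuasiNormOn.exists_le_norm_of_euclidean (Q : QuasiNormOn Y) {ι : Type*} [Fintype ι]
    (φ : EuclideanSpace ℝ ι →ₗ[ℝ] Y) : ∃ M, 0 ≤ M ∧ ∀ a, Q.q (φ a) ≤ M * ‖a‖ := by
  classical
  let e := EuclideanSpace.basisFun ι ℝ
  refine ⟨Q.k ^ Fintype.card ι * ∑ i, Q.q (φ (e i)),
    mul_nonneg (pow_nonneg Q.k_pos.le _) (Finset.sum_nonneg fun i _ => Q.nonneg _), fun a => ?_⟩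
  calc Q.q (φ a) = Q.q (∑ i, a i • φ (e i)) := by
        conv_lhs => rw [← e.sum_repr a]
        simp [e]
    _ ≤ Q.k ^ Fintype.card ι * ∑ i, Q.q (a i • φ (e i)) := Q.map_sum_le _ _
    _ ≤ Q.k ^ Fintype.card ι * ∑ i, Q.q (φ (e i)) * ‖a‖ := by
        gcongr with i
        · exact pow_nonneg Q.k_pos.le _
        · rw [Q.smul_eq, mul_comm]
          exact mul_le_mul_of_nonneg_left (PiLp.norm_apply_le a i) (Q.nonneg _)
    _ = Q.k ^ Fintype.card ι * (∑ i, Q.q (φ (e i))) * ‖a‖ := by rw [mul_assoc, Finset.sum_mul]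

-- The infimal convolution of `k • q ∘ φ` with a large multiple of the norm.
lemma QuasiNormOn.exists_continuous_between (Q : QuasiNormOn Y) {E : Type*}
    [SeminormedAddCommGroup E] (φ : E →+ Y) {M : ℝ} (hM : 0 ≤ M)
    (hφ : ∀ a, Q.q (φ a) ≤ M * ‖a‖) :
    ∃ F : E → ℝ, Continuous F ∧ (∀ a, Q.q (φ a) ≤ F a) ∧ ∀ a, F a ≤ Q.k * Q.q (φ a) := by
  have hk := Q.k_pos.le
  let F : E → ℝ := fun a => ⨅ b, Q.k * (Q.q (φ b) + M * ‖a - b‖)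
  have hbdd (a : E) : BddBelow (Set.range fun b => Q.k * (Q.q (φ b) + M * ‖a - b‖)) :=
    ⟨0, by rintro _ ⟨b, rfl⟩; have := Q.nonneg (φ b); positivity⟩
  have hF (a b : E) : F a ≤ F b + Q.k * M * dist a b := by
    rw [← sub_le_iff_le_add]
    refine le_ciInf fun c => sub_le_iff_le_add.2 ((ciInf_le (hbdd a) c).trans ?_)
    calc Q.k * (Q.q (φ c) + M * ‖a - c‖)
        ≤ Q.k * (Q.q (φ c) + M * (dist a b + ‖b - c‖)) := by
          gcongr
          simpa only [dist_eq_norm] using dist_triangle a b c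
      _ = Q.k * (Q.q (φ c) + M * ‖b - c‖) + Q.k * M * dist a b := by ring
  refine ⟨F, (LipschitzWith.of_le_add_mul ⟨Q.k * M, by positivity⟩ hF).continuous,
    fun a => le_ciInf fun b => ?_, fun a => (ciInf_le (hbdd a) a).trans (by simp)⟩
  calc Q.q (φ a) = Q.q (φ b + φ (a - b)) := by rw [← map_add, add_sub_cancel]
    _ ≤ Q.k * (Q.q (φ b) + Q.q (φ (a - b))) := Q.tri _ _
    _ ≤ Q.k * (Q.q (φ b) + M * ‖a - b‖) := by gcongr; exact hφ _

end ContinuousReplacement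

section EuclideanCombinations

variable {X : Type*} [AddCommGroup X] [Module ℝ X] {ι : Type*} [Fintype ι]

/-- The linear map `a ↦ ∑ aᵢ xᵢ` on Euclidean space. -/
noncomputable def euclideanCombination (x : ι → X) : EuclideanSpace ℝ ι →ₗ[ℝ] X :=
  Fintype.linearCombination ℝ x ∘ₗ (WithLp.linearEquiv 2 ℝ (ι → ℝ)).toLinearMap

lemma euclideanCombination_apply (x : ι → X) (a : EuclideanSpace ℝ ι) :
    euclideanCombination x a = ∑ i, a i • x i := rfl

/-- The Rademacher sum `∑ εᵢ xᵢ`, the signs being indexed by Booleans through `rsign`. -/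
noncomputable def rademacherSum (x : ι → X) (ε : ι → Bool) : X := ∑ i, rsign (ε i) • x i

/-- The isometry of Euclidean space changing the signs of the coordinates according to `ε`. -/
noncomputable def signIsometry (ε : ι → Bool) : EuclideanSpace ℝ ι ≃ₗᵢ[ℝ] EuclideanSpace ℝ ι :=
  LinearIsometryEquiv.piLpCongrRight 2
    fun i => if ε i then LinearIsometryEquiv.refl ℝ ℝ else LinearIsometryEquiv.neg ℝ

lemma signIsometry_apply (ε : ι → Bool) (a : EuclideanSpace ℝ ι) (i : ι) :
    signIsometry ε a i = rsign (ε i) * a i := by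
  by_cases h : ε i <;> simp [signIsometry, rsign, h]

lemma euclideanCombination_signIsometry (x : ι → X) (ε : ι → Bool) (a : EuclideanSpace ℝ ι) :
    euclideanCombination x (signIsometry ε a) = rademacherSum (fun i => a i • x i) ε := by
  simp only [euclideanCombination_apply, signIsometry_apply, rademacherSum, smul_smul]

lemma exists_linearIsometryEquiv_comp_eq {V E : Type*} [AddCommGroup V] [Module ℝ V]
    [NormedAddCommGroup E] [InnerProductSpace ℝ E] [FiniteDimensional ℝ E] (f g : V →ₗ[ℝ] E)
    (hfg : ∀ v, ‖f v‖ = ‖g v‖) : ∃ O : E ≃ₗᵢ[ℝ] E, ∀ v, O (f v) = g v := by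
  have hker : LinearMap.ker f ≤ LinearMap.ker g := fun v hv => by
    rw [LinearMap.mem_ker] at hv ⊢
    rw [← norm_eq_zero, ← hfg, hv, norm_zero]
  let gBar := (LinearMap.ker f).liftQ g hker ∘ₗ f.quotKerEquivRange.symm.toLinearMap
  have hgBar (v : V) : gBar ⟨f v, LinearMap.mem_range_self f v⟩ = g v := by
    simp only [gBar, LinearMap.comp_apply, LinearEquiv.coe_coe]
    rw [show f.quotKerEquivRange.symm ⟨f v, LinearMap.mem_range_self f v⟩ = Submodule.Quotient.mk v
      from f.quotKerEquivRange_symm_apply_image v _]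
    rfl
  let L : LinearMap.range f →ₗᵢ[ℝ] E :=
    { gBar with
      norm_map' := by
        rintro ⟨_, v, rfl⟩
        exact (congrArg norm (hgBar v)).trans (hfg v).symm }
  refine ⟨L.extend.toLinearIsometryEquiv rfl, fun v => ?_⟩
  exact (L.extend_apply ⟨f v, LinearMap.mem_range_self f v⟩).trans (hgBar v)

lemma exists_isometry_euclideanCombination_eq {x y : ι → X}
    (hxy : ∑ i, x i ⊗ₜ[ℝ] x i = ∑ i, y i ⊗ₜ[ℝ] y i) :
    ∃ O : EuclideanSpace ℝ ι ≃ₗᵢ[ℝ] EuclideanSpace ℝ ι,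
      ∀ a, euclideanCombination y a = euclideanCombination x (O a) := by
  let ev (x : ι → X) : Module.Dual ℝ X →ₗ[ℝ] EuclideanSpace ℝ ι :=
    (WithLp.linearEquiv 2 ℝ (ι → ℝ)).symm.toLinearMap ∘ₗ
      LinearMap.pi fun i => Module.Dual.eval ℝ X (x i)
  have hnorm (ξ : Module.Dual ℝ X) : ‖ev y ξ‖ = ‖ev x ξ‖ := by
    have h := congrArg (LinearMap.mul' ℝ ℝ ∘ₗ TensorProduct.map ξ ξ) hxy
    simp only [map_sum, LinearMap.comp_apply, TensorProduct.map_tmul, LinearMap.mul'_apply] at h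
    simp [EuclideanSpace.norm_eq, ev, sq, h]
  obtain ⟨O, hO⟩ := exists_linearIsometryEquiv_comp_eq (ev y) (ev x) hnorm
  refine ⟨O, fun a => sub_eq_zero.1 ((Module.forall_dual_apply_eq_zero_iff ℝ _).1 fun ξ => ?_)⟩
  have h : inner ℝ (ev y ξ) a = inner ℝ (ev x ξ) (O a) := by rw [← hO, O.inner_map_map]
  simpa [euclideanCombination_apply, PiLp.inner_apply, ev, sub_eq_zero] using h

end EuclideanCombinations

section Kwapien

open MeasureTheory ProbabilityTheory

variable {X Y : Type*} [AddCommGroup X] [Module ℝ X] [AddCommGroup Y] [Module ℝ Y]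

/-- The cotype 2 inequality with its constant, all norms being squared. -/
def CotypeTwo (Q : QuasiNormOn Y) (C : ℝ) : Prop :=
  ∀ (n : ℕ) (y : Fin n → Y),
    ∑ i, Q.q (y i) ^ 2 ≤ C * 𝔼 ε : Fin n → Bool, Q.q (rademacherSum y ε) ^ 2

/-- The type 2 inequality for the operator `u`, with its constant, all norms being squared. -/
def OpTypeTwo (QX : QuasiNormOn X) (QY : QuasiNormOn Y) (u : X →ₗ[ℝ] Y) (T : ℝ) : Prop :=
  ∀ (n : ℕ) (x : Fin n → X),
    𝔼 ε : Fin n → Bool, QY.q (u (rademacherSum x ε)) ^ 2 ≤ T * ∑ i, QX.q (x i) ^ 2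

section StdGaussian

variable {ι : Type*} [Fintype ι]

lemma measurePreserving_stdGaussian (O : EuclideanSpace ℝ ι ≃ₗᵢ[ℝ] EuclideanSpace ℝ ι) :
    MeasurePreserving O (stdGaussian (EuclideanSpace ℝ ι)) (stdGaussian (EuclideanSpace ℝ ι)) :=
  ⟨O.continuous.measurable, stdGaussian_map O⟩

lemma integral_comp_stdGaussian (O : EuclideanSpace ℝ ι ≃ₗᵢ[ℝ] EuclideanSpace ℝ ι)
    (G : EuclideanSpace ℝ ι → ℝ) :
    ∫ a, G (O a) ∂stdGaussian (EuclideanSpace ℝ ι) = ∫ a, G a ∂stdGaussian _ :=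
  (measurePreserving_stdGaussian O).integral_comp O.toHomeomorph.measurableEmbedding G

lemma integrable_comp_stdGaussian (O : EuclideanSpace ℝ ι ≃ₗᵢ[ℝ] EuclideanSpace ℝ ι)
    {G : EuclideanSpace ℝ ι → ℝ} (hG : Integrable G (stdGaussian (EuclideanSpace ℝ ι))) :
    Integrable (fun a => G (O a)) (stdGaussian (EuclideanSpace ℝ ι)) :=
  (measurePreserving_stdGaussian O).integrable_comp_of_integrable hG

lemma integrable_coord_sq_stdGaussian (i : ι) :
    Integrable (fun a => a i ^ 2) (stdGaussian (EuclideanSpace ℝ ι)) :=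
  (IsGaussian.memLp_two_id.continuousLinearMap_comp (EuclideanSpace.proj (𝕜 := ℝ) i)).integrable_sq

lemma integral_coord_sq_stdGaussian (i : ι) :
    ∫ a, a i ^ 2 ∂stdGaussian (EuclideanSpace ℝ ι) = 1 := by
  classical
  let L : StrongDual ℝ (EuclideanSpace ℝ ι) := innerSL ℝ (EuclideanSpace.single i 1)
  have hL : ⇑L = fun a => a i := by
    ext a
    exact (EuclideanSpace.inner_single_left i 1 a).trans (by simp)
  calc ∫ a, a i ^ 2 ∂stdGaussian (EuclideanSpace ℝ ι)
      = Var[L; stdGaussian (EuclideanSpace ℝ ι)] := by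
        rw [variance_of_integral_eq_zero L.continuous.aemeasurable
          (integral_strongDual_stdGaussian L), hL]
    _ = 1 := by
        rw [variance_dual_stdGaussian, innerSL_apply_norm]
        simp

lemma integrable_sum_coord_sq_stdGaussian (w : ι → ℝ) :
    Integrable (fun a => ∑ i, a i ^ 2 * w i) (stdGaussian (EuclideanSpace ℝ ι)) :=
  integrable_finsetSum _ fun i _ => (integrable_coord_sq_stdGaussian i).mul_const _

lemma integral_sum_coord_sq_stdGaussian (w : ι → ℝ) :
    ∫ a, ∑ i, a i ^ 2 * w i ∂stdGaussian (EuclideanSpace ℝ ι) = ∑ i, w i := by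
  rw [integral_finsetSum _ fun i _ => (integrable_coord_sq_stdGaussian i).mul_const _]
  simp only [integral_mul_const, integral_coord_sq_stdGaussian, one_mul]

lemma integrable_sq_stdGaussian {F : EuclideanSpace ℝ ι → ℝ} (hF : Continuous F) {M : ℝ}
    (hM : ∀ a, |F a| ≤ M * ‖a‖) :
    Integrable (fun a => F a ^ 2) (stdGaussian (EuclideanSpace ℝ ι)) := by
  have hid : Integrable (fun a => (M * ‖a‖) ^ 2) (stdGaussian (EuclideanSpace ℝ ι)) := by
    simp only [mul_pow]
    exact IsGaussian.memLp_two_id.norm.integrable_sq.const_mul _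
  refine hid.mono' (hF.pow 2).aestronglyMeasurable (ae_of_all _ fun a => ?_)
  rw [Real.norm_eq_abs, abs_pow]
  exact pow_le_pow_left₀ (abs_nonneg _) (hM a) 2

lemma integrable_expect_signIsometry [DecidableEq ι] {G : EuclideanSpace ℝ ι → ℝ}
    (hG : Integrable G (stdGaussian (EuclideanSpace ℝ ι))) :
    Integrable (fun a => 𝔼 ε, G (signIsometry ε a)) (stdGaussian (EuclideanSpace ℝ ι)) := by
  simp only [Fintype.expect_eq_sum_div_card]
  exact (integrable_finsetSum _ fun ε _ =>
    integrable_comp_stdGaussian (signIsometry ε) hG).div_const _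

lemma integral_expect_signIsometry [DecidableEq ι] {G : EuclideanSpace ℝ ι → ℝ}
    (hG : Integrable G (stdGaussian (EuclideanSpace ℝ ι))) :
    ∫ a, 𝔼 ε, G (signIsometry ε a) ∂stdGaussian (EuclideanSpace ℝ ι) =
      ∫ a, G a ∂stdGaussian (EuclideanSpace ℝ ι) := by
  simp only [Fintype.expect_eq_sum_div_card]
  rw [integral_div, integral_finsetSum _ fun ε _ =>
    integrable_comp_stdGaussian (signIsometry ε) hG]
  simp [integral_comp_stdGaussian]

end StdGaussian

variable {QX : QuasiNormOn X} {QY : QuasiNormOn Y}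

lemma CotypeTwo.sum_sq_le_integral {C : ℝ} (hC0 : 0 ≤ C) (hC : CotypeTwo QY C) {n : ℕ}
    (y : Fin n → Y) {G : EuclideanSpace ℝ (Fin n) → ℝ}
    (hG : Integrable G (stdGaussian (EuclideanSpace ℝ (Fin n))))
    (hyG : ∀ a, QY.q (euclideanCombination y a) ^ 2 ≤ G a) :
    ∑ i, QY.q (y i) ^ 2 ≤ C * ∫ a, G a ∂stdGaussian (EuclideanSpace ℝ (Fin n)) := by
  rw [← integral_sum_coord_sq_stdGaussian, ← integral_expect_signIsometry hG,
    ← integral_const_mul]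
  refine integral_mono (integrable_sum_coord_sq_stdGaussian _)
    ((integrable_expect_signIsometry hG).const_mul C) fun a => ?_
  calc ∑ i, a i ^ 2 * QY.q (y i) ^ 2 = ∑ i, QY.q (a i • y i) ^ 2 := by
        simp only [QY.map_smul_sq]
    _ ≤ C * 𝔼 ε : Fin n → Bool, QY.q (rademacherSum (fun i => a i • y i) ε) ^ 2 := hC n _
    _ ≤ C * 𝔼 ε, G (signIsometry ε a) := by
        refine mul_le_mul_of_nonneg_left (Finset.expect_le_expect fun ε _ => ?_) hC0
        rw [← euclideanCombination_signIsometry]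
        exact hyG _

lemma OpTypeTwo.integral_le {u : X →ₗ[ℝ] Y} {T K : ℝ} (hT : OpTypeTwo QX QY u T) (hK : 0 ≤ K)
    {n : ℕ} (x : Fin n → X) {G : EuclideanSpace ℝ (Fin n) → ℝ}
    (hG : Integrable G (stdGaussian (EuclideanSpace ℝ (Fin n))))
    (hxG : ∀ a, G a ≤ K * QY.q (u (euclideanCombination x a)) ^ 2) :
    ∫ a, G a ∂stdGaussian (EuclideanSpace ℝ (Fin n)) ≤ K * (T * ∑ i, QX.q (x i) ^ 2) := by
  rw [← integral_sum_coord_sq_stdGaussian, ← integral_expect_signIsometry hG,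
    ← integral_const_mul, ← integral_const_mul]
  refine integral_mono (integrable_expect_signIsometry hG)
    (((integrable_sum_coord_sq_stdGaussian _).const_mul T).const_mul K) fun a => ?_
  calc 𝔼 ε, G (signIsometry ε a)
      ≤ 𝔼 ε : Fin n → Bool, K * QY.q (u (rademacherSum (fun i => a i • x i) ε)) ^ 2 := by
        refine Finset.expect_le_expect fun ε _ => ?_
        rw [← euclideanCombination_signIsometry]
        exact hxG _
    _ ≤ K * (T * ∑ i, QX.q (a i • x i) ^ 2) := by
        rw [← Finset.mul_expect]
        exact mul_le_mul_of_nonneg_left (hT n _) hK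
    _ = K * (T * ∑ i, a i ^ 2 * QX.q (x i) ^ 2) := by simp only [QX.map_smul_sq]

-- Cotype is used for the `yᵢ` and type for the `xᵢ`; the two Gaussian averages agree because the
-- `yᵢ` arise from the `xᵢ` by a rotation. The Gaussian integrals are those of a continuous `F`
-- since a quasi-norm need not be measurable.
lemma OpTypeTwo.hilbertDominated {u : X →ₗ[ℝ] Y} {C T c : ℝ} (hC0 : 0 ≤ C)
    (hC : CotypeTwo QY C) (hT : OpTypeTwo QX QY u T) (hc : C * (QY.k ^ 2 * T) ≤ c ^ 2) :
    HilbertDominated QX QY u c := by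
  refine hilbertDominated_iff.2 fun n x y hxy => ?_
  obtain ⟨O, hO⟩ := exists_isometry_euclideanCombination_eq hxy
  obtain ⟨M, hM, hφM⟩ := QY.exists_le_norm_of_euclidean (u ∘ₗ euclideanCombination x)
  obtain ⟨F, hFcont, hφF, hFφ⟩ :=
    QY.exists_continuous_between (u ∘ₗ euclideanCombination x).toAddMonoidHom hM hφM
  have hF0 (a) : 0 ≤ F a := (QY.nonneg _).trans (hφF a)
  have hFint : Integrable (fun a => F a ^ 2) (stdGaussian (EuclideanSpace ℝ (Fin n))) := by
    refine integrable_sq_stdGaussian hFcont (M := QY.k * M) fun a => ?_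
    rw [abs_of_nonneg (hF0 a), mul_assoc]
    exact (hFφ a).trans (mul_le_mul_of_nonneg_left (hφM a) QY.k_pos.le)
  have hlower := hC.sum_sq_le_integral hC0 (fun i => u (y i))
    (integrable_comp_stdGaussian O hFint) fun a => by
      have huy : euclideanCombination (fun i => u (y i)) a =
          u (euclideanCombination x (O a)) := by
        rw [← hO]
        simp [euclideanCombination_apply]
      rw [huy]
      exact pow_le_pow_left₀ (QY.nonneg _) (hφF _) 2
  have hupper := hT.integral_le (sq_nonneg QY.k) x hFint fun a => by
    rw [← mul_pow]
    exact pow_le_pow_left₀ (hF0 a) (hFφ a) 2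
  calc ∑ i, QY.q (u (y i)) ^ 2
      ≤ C * ∫ a, F (O a) ^ 2 ∂stdGaussian (EuclideanSpace ℝ (Fin n)) := hlower
    _ = C * ∫ a, F a ^ 2 ∂stdGaussian (EuclideanSpace ℝ (Fin n)) := by
        rw [integral_comp_stdGaussian O fun a => F a ^ 2]
    _ ≤ C * (QY.k ^ 2 * (T * ∑ i, QX.q (x i) ^ 2)) := by gcongr
    _ = C * (QY.k ^ 2 * T) * ∑ i, QX.q (x i) ^ 2 := by ring
    _ ≤ c ^ 2 * ∑ i, QX.q (x i) ^ 2 :=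
        mul_le_mul_of_nonneg_right hc (Finset.sum_nonneg fun i _ => sq_nonneg _)

end Kwapien

section Envelope

variable {X Y : Type*} [AddCommGroup X] [Module ℝ X] [AddCommGroup Y] [Module ℝ Y]

namespace QuasiNormOn

variable (Q : QuasiNormOn X)

/-- The closed unit ball of a quasi-norm. -/
def unitBall : Set X := {x | Q.q x ≤ 1}

variable {Q} in
lemma mem_unitBall {x : X} : x ∈ Q.unitBall ↔ Q.q x ≤ 1 := Iff.rfl

lemma balanced_unitBall : Balanced ℝ Q.unitBall := by
  refine balanced_iff_smul_mem.2 fun {a} ha x hx => ?_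
  rw [mem_unitBall, Q.smul_eq]
  exact mul_le_one₀ ha (Q.nonneg _) hx

open scoped Pointwise in
lemma mem_smul_unitBall {a : ℝ} (ha : a ≠ 0) {x : X} : x ∈ a • Q.unitBall ↔ Q.q x ≤ |a| := by
  rw [Set.mem_smul_set_iff_inv_smul_mem₀ ha, mem_unitBall, Q.smul_eq, abs_inv,
    inv_mul_le_iff₀ (abs_pos.2 ha), mul_one]

lemma absorbent_unitBall : Absorbent ℝ Q.unitBall := by
  refine fun x => absorbs_iff_norm.2 ⟨Q.q x + 1, fun a ha => ?_⟩
  have hx : Q.q x < |a| := (lt_add_one _).trans_le ha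
  have ha0 : a ≠ 0 := abs_pos.1 ((Q.nonneg x).trans_lt hx)
  exact Set.singleton_subset_iff.2 ((Q.mem_smul_unitBall ha0).2 hx.le)

/-- The seminorm of the Banach envelope, that is, the largest seminorm below the quasi-norm. -/
noncomputable def envelope : Seminorm ℝ X :=
  gaugeSeminorm Q.balanced_unitBall.convexHull (convex_convexHull ℝ Q.unitBall)
    (Q.absorbent_unitBall.mono (subset_convexHull ℝ _))

lemma envelope_le (x : X) : Q.envelope x ≤ Q.q x := by
  refine le_of_forall_gt_imp_ge_of_dense fun r hr => ?_
  have hr0 : 0 < r := (Q.nonneg x).trans_lt hr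
  refine gauge_le_of_mem hr0.le (Set.smul_set_mono (subset_convexHull ℝ _) ?_)
  exact (Q.mem_smul_unitBall hr0.ne').2 (hr.le.trans (le_abs_self r))

variable {Q}

lemma le_mul_envelope {F : X → ℝ} {b : ℝ} (hb : 0 ≤ b)
    (hF : ∀ a : ℝ, 0 < a → ∀ x, F (a • x) = a * F x)
    (hFb : ∀ x ∈ convexHull ℝ Q.unitBall, F x ≤ b) (x : X) : F x ≤ b * Q.envelope x := by
  refine le_mul_of_forall_lt₀ fun b' hb' r hr => ?_
  obtain ⟨s, hs, hsr, y, hy, rfl⟩ :=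
    exists_lt_of_gauge_lt (Q.absorbent_unitBall.mono (subset_convexHull ℝ _)) hr
  calc F (s • y) = s * F y := hF s hs y
    _ ≤ s * b := by gcongr; exact hFb y hy
    _ ≤ r * b' := by gcongr; exact (hs.trans hsr).le
    _ = b' * r := mul_comm _ _

lemma exists_mem_unitBall_apply_le (f : X →ₗ[ℝ] ℝ) {x : X} (hx : x ∈ convexHull ℝ Q.unitBall) :
    ∃ z ∈ Q.unitBall, f z ≤ f x := by
  by_contra! hlt
  exact lt_irrefl (f x)
    (convexHull_min hlt (convex_halfSpace_gt f.isLinear (f x)) hx)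

variable {B : LinearMap.BilinForm ℝ X} {c : ℝ}

lemma apply_self_le_sq_of_mem_unitBall (hB : ∀ x, B x x ≤ c ^ 2 * Q.q x ^ 2) {z : X}
    (hz : z ∈ Q.unitBall) : B z z ≤ c ^ 2 :=
  (hB z).trans (mul_le_of_le_one_right (sq_nonneg c) (pow_le_one₀ (Q.nonneg z) hz))

-- The points are chosen greedily, so that each step adds at most `c ^ 2`.
lemma exists_maurey_sample (hsymm : B.IsSymm) (hnonneg : ∀ x, 0 ≤ B x x)
    (hB : ∀ x, B x x ≤ c ^ 2 * Q.q x ^ 2) {x : X} (hx : x ∈ convexHull ℝ Q.unitBall) (N : ℕ) :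
    ∃ z : Fin N → X, (∀ i, z i ∈ Q.unitBall) ∧
      B (∑ i, z i - (N : ℝ) • x) (∑ i, z i - (N : ℝ) • x) ≤ N * c ^ 2 := by
  induction N with
  | zero => exact ⟨Fin.elim0, fun i => i.elim0, by simp⟩
  | succ N ih =>
    obtain ⟨z, hz, hBz⟩ := ih
    set s := ∑ i, z i - (N : ℝ) • x with hs
    obtain ⟨w, hw, hBw⟩ := exists_mem_unitBall_apply_le (B (s - x)) hx
    refine ⟨Fin.snoc z w, Fin.lastCases (by simpa using hw) fun i => by simpa using hz i, ?_⟩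
    have hsum : ∑ i, (Fin.snoc z w : Fin (N + 1) → X) i - ((N + 1 : ℕ) : ℝ) • x = s + w - x := by
      rw [Fin.sum_univ_castSucc, hs]
      simp only [Fin.snoc_castSucc, Fin.snoc_last]
      push_cast
      module
    have hexpand : B (s + w - x) (s + w - x) =
        B s s + 2 * (B (s - x) w - B (s - x) x) + B w w - B x x := by
      simp only [map_add, map_sub, LinearMap.add_apply, LinearMap.sub_apply]
      rw [hsymm.eq w s, hsymm.eq x s, hsymm.eq x w]
      ring
    rw [hsum, hexpand]
    push_cast
    linarith [hnonneg x, apply_self_le_sq_of_mem_unitBall hB hw]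

lemma apply_self_le_envelope_sq (hsymm : B.IsSymm) (hnonneg : ∀ x, 0 ≤ B x x) (hc : 0 ≤ c)
    (hB : ∀ x, B x x ≤ c ^ 2 * Q.q x ^ 2) (x : X) : B x x ≤ c ^ 2 * Q.envelope x ^ 2 := by
  have hsqrt : √(B x x) ≤ c * Q.envelope x := by
    refine le_mul_envelope (F := fun x => √(B x x)) hc (fun a ha x => ?_) (fun x hx => ?_) x
    · simp only [map_smul, LinearMap.smul_apply, smul_eq_mul]
      rw [← mul_assoc, Real.sqrt_mul (by positivity), Real.sqrt_mul_self ha.le]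
    · obtain ⟨w, hw, hBw⟩ := exists_mem_unitBall_apply_le (-B x) hx
      have hdiff := hnonneg (w - x)
      simp only [map_sub, LinearMap.sub_apply, LinearMap.neg_apply, hsymm.eq w x] at hdiff hBw
      refine Real.sqrt_le_iff.2 ⟨hc, ?_⟩
      linarith [apply_self_le_sq_of_mem_unitBall hB hw]
  rw [← mul_pow]
  exact (Real.sqrt_le_iff.1 hsqrt).2

variable {QY : QuasiNormOn Y} {u : X →ₗ[ℝ] Y} {U : ℝ}

lemma map_sum_unitBall_le (hU : 0 ≤ U) (hu : ∀ x, QY.q (u x) ≤ U * Q.q x) {N : ℕ} {z : Fin N → X}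
    (hz : ∀ i, z i ∈ Q.unitBall) : QY.q (u (∑ i, z i)) ≤ N * (QY.k ^ N * U) := by
  calc QY.q (u (∑ i, z i)) = QY.q (∑ i, u (z i)) := by rw [map_sum]
    _ ≤ QY.k ^ N * ∑ i, QY.q (u (z i)) := by
        simpa using QY.map_sum_le Finset.univ fun i => u (z i)
    _ ≤ QY.k ^ N * ∑ _i : Fin N, U := by
        refine mul_le_mul_of_nonneg_left (Finset.sum_le_sum fun i _ => ?_)
          (pow_nonneg QY.k_pos.le N)
        exact (hu _).trans (mul_le_of_le_one_right hU (hz i))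
    _ = N * (QY.k ^ N * U) := by
        rw [Finset.sum_const, Finset.card_univ, Fintype.card_fin, nsmul_eq_mul]
        ring

lemma map_le_mul_envelope (hsymm : B.IsSymm) (hlower : ∀ x, QY.q (u x) ^ 2 ≤ B x x)
    (hc : 0 ≤ c) (hupper : ∀ x, B x x ≤ c ^ 2 * Q.q x ^ 2) (hU : 0 ≤ U)
    (hu : ∀ x, QY.q (u x) ≤ U * Q.q x) {N : ℕ} (hN : 0 < N) (x : X) :
    QY.q (u x) ≤ QY.k * (QY.k ^ N * U + c / √N) * Q.envelope x := by
  have hk := QY.k_pos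
  have hN' : (0 : ℝ) < N := Nat.cast_pos.2 hN
  refine le_mul_envelope (F := fun x => QY.q (u x)) (by positivity) (fun a ha x => ?_)
    (fun x hx => ?_) x
  · rw [map_smul, QY.smul_eq, abs_of_pos ha]
  obtain ⟨z, hz, hBz⟩ :=
    exists_maurey_sample hsymm (fun x => (sq_nonneg _).trans (hlower x)) hupper hx N
  have herror : QY.q (u ((N : ℝ) • x - ∑ i, z i)) ≤ √N * c := by
    rw [map_sub, QY.map_sub_comm, ← map_sub, ← Real.sqrt_sq hc, ← Real.sqrt_mul hN'.le]
    exact Real.le_sqrt_of_sq_le ((hlower _).trans hBz)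
  have hsplit : N * QY.q (u x) ≤ QY.k * (N * (QY.k ^ N * U) + √N * c) := by
    calc N * QY.q (u x) = QY.q (u (∑ i, z i) + u ((N : ℝ) • x - ∑ i, z i)) := by
          rw [← map_add, add_sub_cancel, map_smul, QY.smul_eq, abs_of_pos hN']
      _ ≤ QY.k * (QY.q (u (∑ i, z i)) + QY.q (u ((N : ℝ) • x - ∑ i, z i))) := QY.tri _ _
      _ ≤ QY.k * (N * (QY.k ^ N * U) + √N * c) := by
          gcongr
          exact map_sum_unitBall_le hU hu hz
  refine le_of_mul_le_mul_left (hsplit.trans_eq ?_) hN'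
  field_simp
  linear_combination c * Real.mul_self_sqrt hN'.le

end QuasiNormOn

end Envelope

section L2Seminorm

variable {X Ω : Type*} [AddCommGroup X] [Module ℝ X] [Fintype Ω]

/-- The `L²` seminorm, with respect to the normalized counting measure on `Ω`, of an `X`-valued
function measured pointwise by `p`. -/
noncomputable def l2Seminorm (p : Seminorm ℝ X) : Seminorm ℝ (Ω → X) :=
  Seminorm.of (fun Φ => √(𝔼 ω, p (Φ ω) ^ 2))
    (fun Φ Ψ => by
      refine Real.sqrt_le_iff.2 ⟨by positivity, ?_⟩
      have hΦ : 0 ≤ 𝔼 ω, p (Φ ω) ^ 2 := Finset.expect_nonneg fun ω _ => sq_nonneg _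
      have hΨ : 0 ≤ 𝔼 ω, p (Ψ ω) ^ 2 := Finset.expect_nonneg fun ω _ => sq_nonneg _
      have hmul : 𝔼 ω, p (Φ ω) * p (Ψ ω) ≤ √(𝔼 ω, p (Φ ω) ^ 2) * √(𝔼 ω, p (Ψ ω) ^ 2) := by
        rw [← Real.sqrt_mul hΦ]
        exact Real.le_sqrt_of_sq_le (Finset.expect_mul_sq_le_sq_mul_sq _ _ _)
      calc 𝔼 ω, p ((Φ + Ψ) ω) ^ 2 ≤ 𝔼 ω, (p (Φ ω) + p (Ψ ω)) ^ 2 :=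
            Finset.expect_le_expect fun ω _ =>
              pow_le_pow_left₀ (apply_nonneg p _) (map_add_le_add p _ _) 2
        _ = 𝔼 ω, p (Φ ω) ^ 2 + 2 * 𝔼 ω, p (Φ ω) * p (Ψ ω) + 𝔼 ω, p (Ψ ω) ^ 2 := by
            simp only [add_sq, mul_assoc, Finset.expect_add_distrib, Finset.mul_expect]
        _ ≤ (√(𝔼 ω, p (Φ ω) ^ 2) + √(𝔼 ω, p (Ψ ω) ^ 2)) ^ 2 := by
            rw [add_sq, Real.sq_sqrt hΦ, Real.sq_sqrt hΨ]
            linarith)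
    (fun a Φ => by
      simp only [Pi.smul_apply, map_smul_eq_mul, mul_pow, ← Finset.mul_expect]
      rw [Real.sqrt_mul (sq_nonneg _), Real.sqrt_sq (norm_nonneg a)])

lemma l2Seminorm_apply (p : Seminorm ℝ X) (Φ : Ω → X) :
    l2Seminorm p Φ = √(𝔼 ω, p (Φ ω) ^ 2) := rfl

lemma sq_l2Seminorm (p : Seminorm ℝ X) (Φ : Ω → X) :
    l2Seminorm p Φ ^ 2 = 𝔼 ω, p (Φ ω) ^ 2 :=
  Real.sq_sqrt (Finset.expect_nonneg fun _ _ => sq_nonneg _)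

lemma l2Seminorm_comp_equiv (p : Seminorm ℝ X) (σ : Ω ≃ Ω) (Φ : Ω → X) :
    l2Seminorm p (fun ω => Φ (σ ω)) = l2Seminorm p Φ := by
  rw [l2Seminorm_apply, l2Seminorm_apply,
    Fintype.expect_equiv σ _ (fun ω => p (Φ ω) ^ 2) fun _ => rfl]

lemma l2Seminorm_envelope_le (Q : QuasiNormOn X) (Φ : Ω → X) :
    l2Seminorm Q.envelope Φ ≤ √(𝔼 ω, Q.q (Φ ω) ^ 2) :=
  Real.sqrt_le_sqrt <| Finset.expect_le_expect fun _ _ =>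
    pow_le_pow_left₀ (apply_nonneg _ _) (Q.envelope_le _) 2

end L2Seminorm

section DualNorm

variable {X : Type*} [AddCommGroup X] [Module ℝ X] {Q : QuasiNormOn X} {f : X →ₗ[ℝ] ℝ}

lemma dualNorm_nonneg (Q : QuasiNormOn X) (f : X →ₗ[ℝ] ℝ) : 0 ≤ dualNorm Q.q f :=
  Real.sInf_nonneg fun _ hM => hM.1

lemma abs_apply_le_dualNorm_mul (hf : DualBdd Q.q f) (x : X) :
    |f x| ≤ dualNorm Q.q f * Q.q x :=
  (sInf_bound_mem hf).2 x

lemma abs_apply_le_of_forall_unitBall {b : ℝ} (h : ∀ z ∈ Q.unitBall, f z ≤ b) (x : X) :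
    |f x| ≤ b * Q.q x := by
  have hle (x : X) : f x ≤ b * Q.q x := by
    obtain rfl | hx := eq_or_ne x 0
    · simp [Q.map_zero]
    have hqx : 0 < Q.q x := (Q.nonneg x).lt_of_ne' (mt (Q.eq_zero_iff x).1 hx)
    have hmem : (Q.q x)⁻¹ • x ∈ Q.unitBall := by
      rw [QuasiNormOn.mem_unitBall, Q.smul_eq, abs_of_pos (inv_pos.2 hqx), inv_mul_cancel₀ hqx.ne']
    have hfx := h _ hmem
    rwa [map_smul, smul_eq_mul, inv_mul_le_iff₀ hqx, mul_comm] at hfx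
  refine abs_le'.2 ⟨hle x, ?_⟩
  rw [← map_neg, ← Q.map_neg]
  exact hle (-x)

lemma exists_mem_unitBall_dualNorm_le (Q : QuasiNormOn X) (f : X →ₗ[ℝ] ℝ) :
    ∃ z ∈ Q.unitBall, dualNorm Q.q f ≤ 2 * f z := by
  by_contra! hlt
  have hpos : 0 < dualNorm Q.q f := by
    simpa using hlt 0 (by simp [QuasiNormOn.mem_unitBall, Q.map_zero])
  have hle : dualNorm Q.q f ≤ dualNorm Q.q f / 2 :=
    csInf_le ⟨0, fun _ hM => hM.1⟩ ⟨by positivity, abs_apply_le_of_forall_unitBall fun z hz => by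
      linarith [hlt z hz]⟩
  linarith

lemma expect_dualNorm_sq_le {Ω : Type*} [Fintype Ω] {f : Ω → X →ₗ[ℝ] ℝ}
    (h : ∀ Φ : Ω → X, 𝔼 ω, f ω (Φ ω) ≤ √(𝔼 ω, Q.q (Φ ω) ^ 2)) :
    𝔼 ω, dualNorm Q.q (f ω) ^ 2 ≤ 4 := by
  have hD (ω) : 0 ≤ dualNorm Q.q (f ω) := dualNorm_nonneg Q (f ω)
  choose z hz hfz using fun ω => exists_mem_unitBall_dualNorm_le Q (f ω)
  have hsqrt : 𝔼 ω, dualNorm Q.q (f ω) ^ 2 ≤ 2 * √(𝔼 ω, dualNorm Q.q (f ω) ^ 2) := by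
    calc 𝔼 ω, dualNorm Q.q (f ω) ^ 2
        ≤ 𝔼 ω, 2 * f ω (dualNorm Q.q (f ω) • z ω) := Finset.expect_le_expect fun ω _ => by
          rw [map_smul, smul_eq_mul, mul_left_comm, sq]
          exact mul_le_mul_of_nonneg_left (hfz ω) (hD ω)
      _ ≤ 2 * √(𝔼 ω, Q.q (dualNorm Q.q (f ω) • z ω) ^ 2) := by
          rw [← Finset.mul_expect]
          exact mul_le_mul_of_nonneg_left (h _) zero_le_two
      _ ≤ 2 * √(𝔼 ω, dualNorm Q.q (f ω) ^ 2) := by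
          refine mul_le_mul_of_nonneg_left (Real.sqrt_le_sqrt ?_) zero_le_two
          refine Finset.expect_le_expect fun ω _ => ?_
          rw [Q.map_smul_sq]
          exact mul_le_of_le_one_right (sq_nonneg _) (pow_le_one₀ (Q.nonneg _) (hz ω))
  have hsq := Real.sq_sqrt (Finset.expect_nonneg fun ω (_ : ω ∈ Finset.univ) =>
    sq_nonneg (dualNorm Q.q (f ω)))
  nlinarith [Real.sqrt_nonneg (𝔼 ω, dualNorm Q.q (f ω) ^ 2)]

end DualNorm

section HahnBanach

lemma exists_dual_apply_eq_of_le_seminorm {V E : Type*} [AddCommGroup V] [Module ℝ V]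
    [AddCommGroup E] [Module ℝ E] {J : V →ₗ[ℝ] E} (hJ : Function.Surjective J)
    (p : Seminorm ℝ V) {x : E} {r : ℝ} (hr : 0 < r) (hp : ∀ v, J v = x → r ≤ p v) :
    ∃ F : E →ₗ[ℝ] ℝ, F x = r ∧ ∀ v, F (J v) ≤ p v := by
  have hx : x ≠ 0 := by
    rintro rfl
    simpa using hr.trans_le (hp 0 (map_zero J))
  let line : E →ₗ.[ℝ] ℝ := LinearPMap.mkSpanSingleton x r hx
  let G₀ : V →ₗ.[ℝ] ℝ :=
    ⟨line.domain.comap J, line.toFun ∘ₗ J.restrict fun v hv => hv⟩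
  have hG₀ (v : V) (a : ℝ) (hv : J v = a • x) (hmem : v ∈ line.domain.comap J) :
      G₀ ⟨v, hmem⟩ = a * r := by
    have hres : J.restrict (fun v hv => hv) ⟨v, hmem⟩ = (⟨a • x, hv ▸ hmem⟩ : line.domain) :=
      Subtype.ext hv
    exact (congrArg line hres).trans (LinearPMap.mkSpanSingleton'_apply x r _ a _)
  obtain ⟨G, hG, hGp⟩ := exists_extension_of_le_sublinear G₀ p
    (fun a ha v => by rw [map_smul_eq_mul, Real.norm_of_nonneg ha.le]) (map_add_le_add p) <| by
      rintro ⟨v, hv⟩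
      obtain ⟨a, ha⟩ := Submodule.mem_span_singleton.1 hv
      rw [hG₀ v a ha.symm]
      obtain ha0 | ha0 := le_or_gt a 0
      · exact (mul_nonpos_of_nonpos_of_nonneg ha0 hr.le).trans (apply_nonneg p v)
      · have := hp (a⁻¹ • v) (by rw [map_smul, ← ha, inv_smul_smul₀ ha0.ne'])
        rwa [map_smul_eq_mul, Real.norm_of_nonneg (inv_nonneg.2 ha0.le), le_inv_mul_iff₀ ha0]
          at this
  have hGJ (v : V) (a : ℝ) (hv : J v = a • x) : G v = a * r := by
    have hmem : v ∈ line.domain.comap J := Submodule.mem_span_singleton.2 ⟨a, hv.symm⟩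
    rw [← hG₀ v a hv hmem]
    exact hG ⟨v, hmem⟩
  obtain ⟨s, hs⟩ := J.exists_rightInverse_of_surjective (LinearMap.range_eq_top.2 hJ)
  have hJs (y : E) : J (s y) = y := LinearMap.congr_fun hs y
  refine ⟨G ∘ₗ s, by simpa using hGJ (s x) 1 (by simp [hJs]), fun v => ?_⟩
  have hker : G (s (J v) - v) = 0 := by simpa using hGJ (s (J v) - v) 0 (by simp [hJs])
  rw [LinearMap.comp_apply, sub_eq_zero.1 ((map_sub G _ _).symm.trans hker)]
  exact hGp v

end HahnBanach

section Walsh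

variable {ι : Type*} {X : Type*} [AddCommGroup X] [Module ℝ X]

lemma rsign_mul_self (b : Bool) : rsign b * rsign b = 1 := by cases b <;> simp [rsign]

lemma abs_rsign (b : Bool) : |rsign b| = 1 := by cases b <;> simp [rsign]

lemma rsign_beq (a b : Bool) : rsign (a == b) = rsign a * rsign b := by
  cases a <;> cases b <;> simp [rsign]

/-- The Walsh function `ε ↦ ∏_{i ∈ S} εᵢ` on the discrete cube. -/
noncomputable def walsh (S : Finset ι) (ε : ι → Bool) : ℝ := ∏ i ∈ S, rsign (ε i)

lemma walsh_singleton (i : ι) (ε : ι → Bool) : walsh {i} ε = rsign (ε i) :=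
  Finset.prod_singleton _ _

lemma walsh_mul_self (S : Finset ι) (ε : ι → Bool) : walsh S ε * walsh S ε = 1 := by
  simp only [walsh, ← Finset.prod_mul_distrib, rsign_mul_self, Finset.prod_const_one]

/-- Multiplication by `δ` in the group of signs `{-1, 1}^ι`. -/
def signTranslation (δ : ι → Bool) : (ι → Bool) ≃ (ι → Bool) :=
  Function.Involutive.toPerm (fun ε i => δ i == ε i) fun ε => by
    ext i
    cases δ i <;> simp

lemma walsh_signTranslation (S : Finset ι) (δ ε : ι → Bool) :
    walsh S (signTranslation δ ε) = walsh S δ * walsh S ε := by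
  simp only [walsh, ← Finset.prod_mul_distrib, ← rsign_beq]
  rfl

lemma signTranslation_comm (δ ε : ι → Bool) : signTranslation δ ε = signTranslation ε δ :=
  funext fun i => Bool.beq_comm (a := δ i) (b := ε i)

lemma signTranslation_true (ε : ι → Bool) : signTranslation (fun _ => true) ε = ε :=
  funext fun _ => Bool.true_beq _

variable [Fintype ι]

lemma sum_pow_mul_walsh (τ : ℝ) (δ : ι → Bool) :
    ∑ S, τ ^ S.card * walsh S δ = ∏ i, (1 + τ * rsign (δ i)) := by
  rw [Finset.prod_one_add, Finset.powerset_univ]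
  simp only [Finset.prod_mul_distrib, Finset.prod_const, walsh]

variable [DecidableEq ι]

lemma sum_walsh_mul_walsh (S T : Finset ι) :
    ∑ ε, walsh S ε * walsh T ε = if S = T then 2 ^ Fintype.card ι else 0 := by
  split_ifs with hST
  · simp [hST, walsh_mul_self]
  obtain ⟨i, hi⟩ : ∃ i, ¬(i ∈ S ↔ i ∈ T) := by
    by_contra! hiff
    exact hST (Finset.ext hiff)
  have hprod (ε : ι → Bool) : walsh S ε * walsh T ε =
      ∏ j, (if j ∈ S then rsign (ε j) else 1) * (if j ∈ T then rsign (ε j) else 1) := by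
    simp only [walsh, Finset.prod_mul_distrib, Finset.prod_ite_mem, Finset.univ_inter]
  simp only [hprod]
  rw [← Fintype.prod_sum fun (j : ι) (b : Bool) =>
    (if j ∈ S then rsign b else 1) * (if j ∈ T then rsign b else 1)]
  refine Finset.prod_eq_zero (Finset.mem_univ i) ?_
  by_cases hS : i ∈ S <;> by_cases hT : i ∈ T <;> simp_all [rsign]

/-- The `S`-th Walsh coefficient of an `X`-valued function on the discrete cube. -/
noncomputable def walshCoeff (S : Finset ι) : ((ι → Bool) → X) →ₗ[ℝ] X :=
  ((2 : ℝ) ^ Fintype.card ι)⁻¹ • ∑ ε, walsh S ε • LinearMap.proj ε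

lemma walshCoeff_apply (S : Finset ι) (Φ : (ι → Bool) → X) :
    walshCoeff S Φ = ((2 : ℝ) ^ Fintype.card ι)⁻¹ • ∑ ε, walsh S ε • Φ ε := by
  simp [walshCoeff]

lemma walshCoeff_walsh_smul (S T : Finset ι) (x : X) :
    walshCoeff S (fun ε => walsh T ε • x) = if S = T then x else 0 := by
  simp only [walshCoeff_apply, smul_smul, ← Finset.sum_smul, sum_walsh_mul_walsh]
  split_ifs <;> simp

lemma walshCoeff_singleton_rademacherSum (i : ι) (x : ι → X) :
    walshCoeff {i} (rademacherSum x) = x i := by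
  have hx : rademacherSum x = ∑ j, fun ε => walsh {j} ε • x j := by
    ext ε
    simp [rademacherSum, walsh_singleton]
  simp [hx, walshCoeff_walsh_smul]

/-- The operator multiplying the Walsh coefficients of degree `k` by `m k`. -/
noncomputable def walshMultiplier (m : ℕ → ℝ) (Φ : (ι → Bool) → X) (ε : ι → Bool) : X :=
  ∑ S, walsh S ε • m S.card • walshCoeff S Φ

lemma walshCoeff_walshMultiplier (m : ℕ → ℝ) (Φ : (ι → Bool) → X) (S : Finset ι) :
    walshCoeff S (walshMultiplier m Φ) = m S.card • walshCoeff S Φ := by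
  have hm : walshMultiplier m Φ = ∑ T, fun ε => walsh T ε • m T.card • walshCoeff T Φ := by
    ext ε
    simp [walshMultiplier]
  simp [hm, walshCoeff_walsh_smul]

lemma walshMultiplier_add (m m' : ℕ → ℝ) (Φ : (ι → Bool) → X) :
    walshMultiplier (m + m') Φ = walshMultiplier m Φ + walshMultiplier m' Φ := by
  ext ε
  simp only [walshMultiplier, Pi.add_apply, add_smul, smul_add, Finset.sum_add_distrib]

lemma walshMultiplier_smul (a : ℝ) (m : ℕ → ℝ) (Φ : (ι → Bool) → X) :
    walshMultiplier (a • m) Φ = a • walshMultiplier m Φ := by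
  ext ε
  simp only [walshMultiplier, Pi.smul_apply, smul_eq_mul, mul_smul, Finset.smul_sum]
  exact Finset.sum_congr rfl fun S _ => smul_comm _ _ _

lemma walshMultiplier_indicator_one (Φ : (ι → Bool) → X) :
    walshMultiplier (Pi.single 1 1) Φ = rademacherSum fun i => walshCoeff {i} Φ := by
  ext ε
  have hsupp : ∀ S ∉ Finset.powersetCard 1 (Finset.univ : Finset ι),
      walsh S ε • (Pi.single 1 1 : ℕ → ℝ) S.card • walshCoeff S Φ = 0 := fun S hS => by
    rw [Finset.mem_powersetCard_univ] at hS
    simp [hS]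
  rw [walshMultiplier, ← Finset.sum_subset (Finset.subset_univ _) fun S _ => hsupp S,
    Finset.powersetCard_one, Finset.sum_map]
  simp [rademacherSum, walsh_singleton]

lemma walshMultiplier_pow_apply (τ : ℝ) (Φ : (ι → Bool) → X) (ε : ι → Bool) :
    walshMultiplier (τ ^ ·) Φ ε = ((2 : ℝ) ^ Fintype.card ι)⁻¹ •
      ∑ δ, (∏ i, (1 + τ * rsign (δ i))) • Φ (signTranslation δ ε) := by
  have hcoeff (S : Finset ι) : walsh S ε • walshCoeff S Φ =
      ((2 : ℝ) ^ Fintype.card ι)⁻¹ • ∑ δ, walsh S δ • Φ (signTranslation δ ε) := by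
    rw [walshCoeff_apply, ← Equiv.sum_comp (signTranslation ε), smul_comm, Finset.smul_sum]
    simp only [signTranslation_comm ε, walsh_signTranslation, smul_smul,
      mul_left_comm (walsh S ε), walsh_mul_self, mul_one]
  simp only [walshMultiplier, smul_comm (walsh _ ε), hcoeff, ← sum_pow_mul_walsh, Finset.smul_sum,
    Finset.sum_smul]
  rw [Finset.sum_comm]
  refine Finset.sum_congr rfl fun δ _ => Finset.sum_congr rfl fun S _ => ?_
  module

lemma walshMultiplier_one (Φ : (ι → Bool) → X) : walshMultiplier 1 Φ = Φ := by
  ext ε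
  have hzero (δ : ι → Bool) (hδ : δ ≠ fun _ => true) : ∏ i, (1 + 1 * rsign (δ i)) = 0 := by
    obtain ⟨i, hi⟩ := Function.ne_iff.1 hδ
    exact Finset.prod_eq_zero (Finset.mem_univ i) (by simp [rsign, hi])
  have hone : (1 : ℕ → ℝ) = fun k => 1 ^ k := by ext; simp
  rw [hone, walshMultiplier_pow_apply, Finset.sum_eq_single (fun _ => true)
    (fun δ _ hδ => by rw [hzero δ hδ, zero_smul]) (by simp), signTranslation_true]
  norm_num [rsign]

lemma expect_apply_self_eq_sum_walshCoeff (B : LinearMap.BilinForm ℝ X) (Φ : (ι → Bool) → X) :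
    𝔼 ε, B (Φ ε) (Φ ε) = ∑ S, B (walshCoeff S Φ) (walshCoeff S Φ) := by
  have hexpand (ε : ι → Bool) : B (Φ ε) (Φ ε) = ∑ S, walsh S ε * B (Φ ε) (walshCoeff S Φ) := by
    conv_lhs => enter [2]; rw [← walshMultiplier_one Φ]
    simp [walshMultiplier]
  simp only [hexpand, Fintype.expect_eq_sum_div_card]
  rw [Finset.sum_comm, Finset.sum_div]
  refine Finset.sum_congr rfl fun S _ => ?_
  conv_rhs => enter [1]; rw [walshCoeff_apply]
  simp [div_eq_inv_mul]

lemma expect_walshMultiplier_le {B : LinearMap.BilinForm ℝ X} (hB : ∀ x, 0 ≤ B x x) {m : ℕ → ℝ}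
    {M : ℝ} (hm : ∀ k, m k ^ 2 ≤ M) (Φ : (ι → Bool) → X) :
    𝔼 ε, B (walshMultiplier m Φ ε) (walshMultiplier m Φ ε) ≤ M * 𝔼 ε, B (Φ ε) (Φ ε) := by
  rw [expect_apply_self_eq_sum_walshCoeff, expect_apply_self_eq_sum_walshCoeff, Finset.mul_sum]
  refine Finset.sum_le_sum fun S _ => ?_
  rw [walshCoeff_walshMultiplier, map_smul, map_smul, LinearMap.smul_apply, smul_eq_mul,
    smul_eq_mul, ← mul_assoc, ← sq]
  exact mul_le_mul_of_nonneg_right (hm _) (hB _)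

-- The noise operator is an average of the isometries induced by the sign translations.
lemma l2Seminorm_walshMultiplier_pow_le (p : Seminorm ℝ X) {τ : ℝ} (hτ : |τ| ≤ 1)
    (Φ : (ι → Bool) → X) : l2Seminorm p (walshMultiplier (τ ^ ·) Φ) ≤ l2Seminorm p Φ := by
  have hweight (δ : ι → Bool) : 0 ≤ ∏ i, (1 + τ * rsign (δ i)) := by
    refine Finset.prod_nonneg fun i _ => ?_
    have : |τ * rsign (δ i)| ≤ 1 := by rwa [abs_mul, abs_rsign, mul_one]
    linarith [neg_le_of_abs_le this]
  have hmass : ∑ δ : ι → Bool, ∏ i, (1 + τ * rsign (δ i)) = 2 ^ Fintype.card ι := by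
    have hfactor : ∑ b, (1 + τ * rsign b) = 2 := by
      simp only [Fintype.sum_bool, rsign, if_true, Bool.false_eq_true, if_false]
      ring
    rw [← Fintype.prod_sum fun (_ : ι) (b : Bool) => 1 + τ * rsign b]
    simp only [hfactor, Finset.prod_const, Finset.card_univ]
  have havg : walshMultiplier (τ ^ ·) Φ = ((2 : ℝ) ^ Fintype.card ι)⁻¹ •
      ∑ δ, (∏ i, (1 + τ * rsign (δ i))) • fun ε => Φ (signTranslation δ ε) := by
    ext ε
    simp [walshMultiplier_pow_apply]
  calc l2Seminorm p (walshMultiplier (τ ^ ·) Φ)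
      ≤ ((2 : ℝ) ^ Fintype.card ι)⁻¹ * ∑ δ : ι → Bool,
          l2Seminorm p ((∏ i, (1 + τ * rsign (δ i))) • fun ε => Φ (signTranslation δ ε)) := by
        rw [havg, map_smul_eq_mul, Real.norm_of_nonneg (by positivity)]
        gcongr
        exact Finset.le_sum_of_subadditive (l2Seminorm p) (map_zero _).le (map_add_le_add _) _ _
    _ = ((2 : ℝ) ^ Fintype.card ι)⁻¹ *
          ∑ δ : ι → Bool, (∏ i, (1 + τ * rsign (δ i))) * l2Seminorm p Φ := by
        simp only [map_smul_eq_mul, l2Seminorm_comp_equiv, Real.norm_of_nonneg (hweight _)]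
    _ = l2Seminorm p Φ := by
        rw [← Finset.sum_mul, hmass, inv_mul_cancel_left₀ (by positivity)]

/-- The multiplier `(τ ^ k - (-τ) ^ k) / (2 τ)` of the odd part of the noise operator, normalized
to be `1` at `k = 1`. -/
noncomputable def oddNoise (τ : ℝ) : ℕ → ℝ := (2 * τ)⁻¹ • ((τ ^ ·) + (-1 : ℝ) • ((-τ) ^ ·))

lemma l2Seminorm_walshMultiplier_oddNoise_le (p : Seminorm ℝ X) {τ : ℝ} (hτ0 : 0 < τ)
    (hτ1 : τ ≤ 1) (Φ : (ι → Bool) → X) :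
    l2Seminorm p (walshMultiplier (oddNoise τ) Φ) ≤ τ⁻¹ * l2Seminorm p Φ := by
  have hpos := l2Seminorm_walshMultiplier_pow_le p (abs_of_pos hτ0 |>.trans_le hτ1) Φ
  have hneg := l2Seminorm_walshMultiplier_pow_le p
    ((abs_neg τ).trans (abs_of_pos hτ0) |>.trans_le hτ1) Φ
  rw [oddNoise, walshMultiplier_smul, walshMultiplier_add, walshMultiplier_smul, map_smul_eq_mul,
    Real.norm_of_nonneg (by positivity)]
  calc (2 * τ)⁻¹ * l2Seminorm p
        (walshMultiplier (τ ^ ·) Φ + (-1 : ℝ) • walshMultiplier ((-τ) ^ ·) Φ)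
      ≤ (2 * τ)⁻¹ * (l2Seminorm p (walshMultiplier (τ ^ ·) Φ) +
          l2Seminorm p (walshMultiplier ((-τ) ^ ·) Φ)) := by
        rw [neg_one_smul, ← map_neg_eq_map (l2Seminorm p) (walshMultiplier ((-τ) ^ ·) Φ)]
        gcongr
        exact map_add_le_add _ _ _
    _ ≤ (2 * τ)⁻¹ * (l2Seminorm p Φ + l2Seminorm p Φ) := by gcongr
    _ = τ⁻¹ * l2Seminorm p Φ := by
        field_simp
        ring

lemma single_one_sub_oddNoise_sq_le {τ : ℝ} (hτ0 : 0 < τ) (hτ1 : τ ≤ 1) (k : ℕ) :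
    ((Pi.single 1 1 : ℕ → ℝ) - oddNoise τ) k ^ 2 ≤ τ ^ 4 := by
  simp only [oddNoise, Pi.sub_apply, Pi.smul_apply, Pi.add_apply, smul_eq_mul]
  obtain ⟨j, rfl | rfl⟩ := k.even_or_odd'
  · rw [(even_two_mul j).neg_pow, Pi.single_eq_of_ne (by omega)]
    simp [hτ0.le]
  have hodd : (2 * τ)⁻¹ * (τ ^ (2 * j + 1) + -1 * (-τ) ^ (2 * j + 1)) = τ ^ (2 * j) := by
    rw [Odd.neg_pow ⟨j, rfl⟩]
    field_simp
    ring
  rw [hodd]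
  obtain rfl | hj := j.eq_zero_or_pos
  · simp [hτ0.le]
  · rw [Pi.single_eq_of_ne (by omega), zero_sub, neg_sq, ← pow_mul]
    exact pow_le_pow_of_le_one hτ0.le hτ1 (by omega)

end Walsh

section Duality

lemma sum_sq_le_of_rpow_le {n : ℕ} {a : Fin n → ℝ} {g : (Fin n → Bool) → ℝ} {C : ℝ}
    (h : (∑ i, a i ^ (2 : ℝ)) ^ (1 / 2 : ℝ) ≤
      C * (((2 : ℝ) ^ n)⁻¹ * ∑ ε, g ε ^ (2 : ℝ)) ^ (1 / 2 : ℝ)) :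
    ∑ i, a i ^ 2 ≤ C ^ 2 * 𝔼 ε, g ε ^ 2 := by
  have hmean : ((2 : ℝ) ^ n)⁻¹ * ∑ ε, g ε ^ 2 = 𝔼 ε, g ε ^ 2 := by
    rw [Fintype.expect_eq_sum_div_card, inv_mul_eq_div]
    simp
  simp only [Real.rpow_two, ← Real.sqrt_eq_rpow, hmean] at h
  have hsq := (Real.sqrt_le_iff.1 h).2
  rwa [mul_pow, Real.sq_sqrt (Finset.expect_nonneg fun _ _ => sq_nonneg _)] at hsq

variable {X : Type*} [AddCommGroup X] [Module ℝ X] {Q : QuasiNormOn X} {C : ℝ}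

lemma HasCotype.exists_cotypeTwo (h : HasCotype Q.q 2) : ∃ C, 0 < C ∧ CotypeTwo Q C := by
  obtain ⟨C, hC, h⟩ := h
  exact ⟨C ^ 2, by positivity, fun n x => sum_sq_le_of_rpow_le (h n x)⟩

/-- The dual of `(X, Q.q)` has cotype `2` in squared form: `∑ ‖fᵢ‖² ≤ C · 𝔼 ‖∑ εᵢ fᵢ‖²`. -/
def DualCotypeTwo (Q : QuasiNormOn X) (C : ℝ) : Prop :=
  ∀ (n : ℕ) (f : Fin n → X →ₗ[ℝ] ℝ), (∀ i, DualBdd Q.q (f i)) →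
    ∑ i, dualNorm Q.q (f i) ^ 2 ≤ C * 𝔼 ε, dualNorm Q.q (rademacherSum f ε) ^ 2

lemma DualHasCotype2.exists_dualCotypeTwo (h : DualHasCotype2 Q.q) :
    ∃ C, 0 < C ∧ DualCotypeTwo Q C := by
  obtain ⟨C, hC, h⟩ := h
  exact ⟨C ^ 2, by positivity, fun n f hf => sum_sq_le_of_rpow_le (h n f hf)⟩

lemma sum_apply_walshCoeff_singleton {ι : Type*} [Fintype ι] [DecidableEq ι]
    (f : ι → X →ₗ[ℝ] ℝ) (Φ : (ι → Bool) → X) :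
    ∑ i, f i (walshCoeff {i} Φ) = 𝔼 ε, rademacherSum f ε (Φ ε) := by
  simp only [walshCoeff_apply, walsh_singleton, map_smul, map_sum, smul_eq_mul, ← Finset.mul_sum,
    rademacherSum, LinearMap.sum_apply, LinearMap.smul_apply, Fintype.expect_eq_sum_div_card]
  rw [Finset.sum_comm, inv_mul_eq_div]
  simp

lemma DualCotypeTwo.sum_apply_le (hC : DualCotypeTwo Q C) (hC0 : 0 ≤ C) {n : ℕ}
    {f : Fin n → X →ₗ[ℝ] ℝ}
    (hf : ∀ Φ : (Fin n → Bool) → X, ∑ i, f i (walshCoeff {i} Φ) ≤ √(𝔼 ε, Q.q (Φ ε) ^ 2))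
    (x : Fin n → X) : ∑ i, f i (x i) ≤ √(C * 4) * √(∑ i, Q.q (x i) ^ 2) := by
  have hle (i : Fin n) (z : X) : f i z ≤ Q.q z := by
    have hsingle (ε : Fin n → Bool) :
        rademacherSum (Pi.single i z : Fin n → X) ε = rsign (ε i) • z := by
      rw [rademacherSum, Finset.sum_eq_single i (fun j _ hj => by simp [hj]) (by simp),
        Pi.single_eq_same]
    have hz := hf (rademacherSum (Pi.single i z))
    simp only [walshCoeff_singleton_rademacherSum, hsingle, Q.smul_eq, abs_rsign, one_mul,
      Fintype.expect_const, Real.sqrt_sq (Q.nonneg z)] at hz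
    rwa [Finset.sum_eq_single i (fun j _ hj => by simp [hj]) (by simp), Pi.single_eq_same] at hz
  have hbdd (i : Fin n) : DualBdd Q.q (f i) :=
    ⟨1, zero_le_one, abs_apply_le_of_forall_unitBall fun z hz => (hle i z).trans hz⟩
  have hmean : 𝔼 ε, dualNorm Q.q (rademacherSum f ε) ^ 2 ≤ 4 :=
    expect_dualNorm_sq_le fun Φ => (sum_apply_walshCoeff_singleton f Φ).symm.trans_le (hf Φ)
  calc ∑ i, f i (x i) ≤ ∑ i, dualNorm Q.q (f i) * Q.q (x i) :=
        Finset.sum_le_sum fun i _ => (le_abs_self _).trans (abs_apply_le_dualNorm_mul (hbdd i) _)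
    _ ≤ √(∑ i, dualNorm Q.q (f i) ^ 2) * √(∑ i, Q.q (x i) ^ 2) :=
        Real.sum_mul_le_sqrt_mul_sqrt _ _ _
    _ ≤ √(C * 4) * √(∑ i, Q.q (x i) ^ 2) := by
        gcongr
        exact (hC n f hbdd).trans (mul_le_mul_of_nonneg_left hmean hC0)

/-- The property dual to cotype `2` of the dual: every family in `X` is the family of first order
Walsh coefficients of a function on the cube whose mean square, in the envelope seminorm, is
controlled by the sum of the squares of the family. -/
def RademacherLifting (Q : QuasiNormOn X) (C : ℝ) : Prop :=
  ∀ (n : ℕ) (x : Fin n → X), ∃ Φ : (Fin n → Bool) → X,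
    (∀ i, walshCoeff {i} Φ = x i) ∧ l2Seminorm Q.envelope Φ ^ 2 ≤ C * ∑ i, Q.q (x i) ^ 2

-- If every lift of `x` were too large, Hahn–Banach would give functionals `fᵢ` on `X` violating
-- the cotype inequality at `x`.
lemma DualCotypeTwo.rademacherLifting (hC : DualCotypeTwo Q C) (hC0 : 0 < C) :
    RademacherLifting Q (C * 9) := by
  intro n x
  set R := ∑ i, Q.q (x i) ^ 2
  have hR0 : 0 ≤ R := by positivity
  obtain hRz | hRpos := hR0.eq_or_lt
  · have hx (i : Fin n) : x i = 0 := by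
      have hi := (Finset.sum_eq_zero_iff_of_nonneg fun i _ => sq_nonneg (Q.q (x i))).1 hRz.symm i
        (Finset.mem_univ i)
      exact (Q.eq_zero_iff _).1 (pow_eq_zero_iff two_ne_zero |>.1 hi)
    exact ⟨0, fun i => by rw [map_zero, hx], by simp [← hRz]⟩
  by_contra! hlarge
  let J : ((Fin n → Bool) → X) →ₗ[ℝ] Fin n → X := LinearMap.pi fun i => walshCoeff {i}
  have hJ : Function.Surjective J := fun y =>
    ⟨rademacherSum y, funext fun i => walshCoeff_singleton_rademacherSum i y⟩
  obtain ⟨F, hFx, hF⟩ := exists_dual_apply_eq_of_le_seminorm hJ (l2Seminorm Q.envelope)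
    (x := x) (r := √(C * 9 * R)) (by positivity) fun Φ hΦ =>
      Real.sqrt_le_iff.2 ⟨apply_nonneg _ _, (hlarge Φ fun i => congrFun hΦ i).le⟩
  let f (i : Fin n) : X →ₗ[ℝ] ℝ := F ∘ₗ LinearMap.single ℝ (fun _ => X) i
  have hFf (y : Fin n → X) : ∑ i, f i (y i) = F y := by
    conv_rhs => rw [← Finset.univ_sum_single y, map_sum]
    rfl
  have hle := hC.sum_apply_le hC0.le (f := f) (fun Φ => by
    rw [hFf]
    exact (hF Φ).trans (l2Seminorm_envelope_le Q Φ)) x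
  rw [hFf, hFx, ← Real.sqrt_mul (by positivity)] at hle
  have := (Real.sqrt_le_sqrt_iff (by positivity)).1 hle
  nlinarith

end Duality

section APriori

variable {X Y : Type*} [AddCommGroup X] [Module ℝ X] [AddCommGroup Y] [Module ℝ Y]
  {QX : QuasiNormOn X} {QY : QuasiNormOn Y} {u : X →ₗ[ℝ] Y} {b c d L τ U : ℝ}

lemma HilbertDominated.mono (hu : HilbertDominated QX QY u c) (hcd : c ^ 2 ≤ d ^ 2) :
    HilbertDominated QX QY u d := by
  obtain ⟨B, hsymm, hlower, hupper⟩ := hu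
  exact ⟨B, hsymm, hlower, fun x =>
    (hupper x).trans (mul_le_mul_of_nonneg_right hcd (sq_nonneg _))⟩

-- The odd part of the noise operator costs a factor `τ⁻¹` in the envelope seminorm, and what it
-- leaves of a Rademacher sum is of order `τ ^ 4` in the Hilbertian seminorm.
lemma RademacherLifting.opTypeTwo (hX : RademacherLifting QX L) {B : LinearMap.BilinForm ℝ X}
    (hsymm : B.IsSymm) (hlower : ∀ x, QY.q (u x) ^ 2 ≤ B x x) (hc : 0 ≤ c)
    (hupper : ∀ x, B x x ≤ c ^ 2 * QX.q x ^ 2) (hb : ∀ x, QY.q (u x) ≤ b * QX.envelope x)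
    (hτ0 : 0 < τ) (hτ1 : τ ≤ 1) :
    OpTypeTwo QX QY u (2 * QY.k ^ 2 * (b ^ 2 * τ⁻¹ ^ 2 + c ^ 2 * τ ^ 4) * L) := by
  intro n x
  obtain ⟨Φ, hΦx, hΦ⟩ := hX n x
  have hB (x : X) : 0 ≤ B x x := (sq_nonneg _).trans (hlower x)
  set Ψ := walshMultiplier (oddNoise τ) Φ with hΨdef
  set Δ := walshMultiplier (Pi.single 1 1 - oddNoise τ) Φ with hΔdef
  have hsum (ε : Fin n → Bool) : rademacherSum x ε = Ψ ε + Δ ε := by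
    rw [← Pi.add_apply, hΨdef, hΔdef, ← walshMultiplier_add, add_sub_cancel,
      walshMultiplier_indicator_one, funext hΦx]
  have hΨ : 𝔼 ε, QX.envelope (Ψ ε) ^ 2 ≤ τ⁻¹ ^ 2 * l2Seminorm QX.envelope Φ ^ 2 := by
    rw [← sq_l2Seminorm, ← mul_pow]
    exact pow_le_pow_left₀ (apply_nonneg _ _)
      (l2Seminorm_walshMultiplier_oddNoise_le _ hτ0 hτ1 Φ) 2
  have hΔ : 𝔼 ε, B (Δ ε) (Δ ε) ≤ τ ^ 4 * (c ^ 2 * l2Seminorm QX.envelope Φ ^ 2) := by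
    refine (expect_walshMultiplier_le hB (single_one_sub_oddNoise_sq_le hτ0 hτ1) Φ).trans ?_
    gcongr
    rw [sq_l2Seminorm, Finset.mul_expect]
    exact Finset.expect_le_expect fun ε _ =>
      QX.apply_self_le_envelope_sq hsymm hB hc hupper (Φ ε)
  calc 𝔼 ε, QY.q (u (rademacherSum x ε)) ^ 2
      ≤ 𝔼 ε, 2 * QY.k ^ 2 * (b ^ 2 * QX.envelope (Ψ ε) ^ 2 + B (Δ ε) (Δ ε)) :=
        Finset.expect_le_expect fun ε _ => by
          rw [hsum, map_add]
          refine (QY.sq_add_le _ _).trans ?_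
          gcongr
          · rw [← mul_pow]
            exact pow_le_pow_left₀ (QY.nonneg _) (hb _) 2
          · exact hlower _
    _ = 2 * QY.k ^ 2 * (b ^ 2 * 𝔼 ε, QX.envelope (Ψ ε) ^ 2 + 𝔼 ε, B (Δ ε) (Δ ε)) := by
        rw [← Finset.mul_expect, Finset.expect_add_distrib, ← Finset.mul_expect]
    _ ≤ 2 * QY.k ^ 2 * (b ^ 2 * (τ⁻¹ ^ 2 * l2Seminorm QX.envelope Φ ^ 2) +
          τ ^ 4 * (c ^ 2 * l2Seminorm QX.envelope Φ ^ 2)) := by gcongr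
    _ = 2 * QY.k ^ 2 * (b ^ 2 * τ⁻¹ ^ 2 + c ^ 2 * τ ^ 4) * l2Seminorm QX.envelope Φ ^ 2 := by ring
    _ ≤ 2 * QY.k ^ 2 * (b ^ 2 * τ⁻¹ ^ 2 + c ^ 2 * τ ^ 4) * (L * ∑ i, QX.q (x i) ^ 2) := by gcongr
    _ = _ := by ring

lemma exists_parameters_le {M k : ℝ} (hM : 0 ≤ M) (hk : 0 < k) :
    ∃ K N τ, 0 ≤ K ∧ 0 < N ∧ 0 < τ ∧ τ ≤ 1 ∧ ∀ U c : ℝ, 0 ≤ U → 0 ≤ c →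
      M * ((k * (k ^ N * U + c / √(N : ℕ))) ^ 2 * τ⁻¹ ^ 2 + c ^ 2 * τ ^ 4) ≤
        (K * U + c / 2) ^ 2 := by
  obtain ⟨s, hs, rfl⟩ : ∃ s, 0 ≤ s ∧ s ^ 2 = M := ⟨√M, Real.sqrt_nonneg M, Real.sq_sqrt hM⟩
  obtain ⟨τ, hτ0, hτ1, hτ⟩ : ∃ τ : ℝ, 0 < τ ∧ τ ≤ 1 ∧ s * τ ^ 2 ≤ 1 / 4 := by
    have hle : (4 * s + 1)⁻¹ ≤ 1 := inv_le_one_of_one_le₀ (by linarith)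
    refine ⟨(4 * s + 1)⁻¹, by positivity, hle, ?_⟩
    calc s * (4 * s + 1)⁻¹ ^ 2 ≤ s * (4 * s + 1)⁻¹ := by
          gcongr
          exact pow_le_of_le_one (by positivity) hle two_ne_zero
      _ ≤ 1 / 4 := by
          rw [← div_eq_mul_inv, div_le_div_iff₀ (by positivity) (by norm_num)]
          linarith
  obtain ⟨N, hN⟩ := exists_nat_gt ((4 * (s * k * τ⁻¹)) ^ 2)
  have hN0 : (0 : ℝ) < N := (sq_nonneg _).trans_lt hN
  have hsqrt : s * k * τ⁻¹ / √N ≤ 1 / 4 := by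
    rw [div_le_div_iff₀ (by positivity) (by norm_num), one_mul, mul_comm]
    exact Real.le_sqrt_of_sq_le hN.le
  refine ⟨s * k * τ⁻¹ * k ^ N, N, τ, by positivity, by exact_mod_cast hN0, hτ0, hτ1,
    fun U c hU hc => ?_⟩
  set b := k * (k ^ N * U + c / √N) with hb
  calc s ^ 2 * (b ^ 2 * τ⁻¹ ^ 2 + c ^ 2 * τ ^ 4)
      = (s * b * τ⁻¹) ^ 2 + (s * τ ^ 2 * c) ^ 2 := by ring
    _ ≤ (s * b * τ⁻¹ + s * τ ^ 2 * c) ^ 2 := by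
        have : 0 ≤ (s * b * τ⁻¹) * (s * τ ^ 2 * c) := by positivity
        linarith [add_sq (s * b * τ⁻¹) (s * τ ^ 2 * c)]
    _ = (s * k * τ⁻¹ * k ^ N * U + (s * k * τ⁻¹ / √N * c + s * τ ^ 2 * c)) ^ 2 := by
        rw [hb]
        ring
    _ ≤ (s * k * τ⁻¹ * k ^ N * U + (1 / 4 * c + 1 / 4 * c)) ^ 2 := by gcongr
    _ = (s * k * τ⁻¹ * k ^ N * U + c / 2) ^ 2 := by ring

variable {C : ℝ}

lemma RademacherLifting.exists_hilbertDominated_half (hX : RademacherLifting QX L) (hL : 0 ≤ L)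
    (hY : CotypeTwo QY C) (hC : 0 ≤ C) :
    ∃ K, 0 ≤ K ∧ ∀ (u : X →ₗ[ℝ] Y) (U c : ℝ), 0 ≤ U → 0 ≤ c → OpBoundedBy QX.q QY.q u U →
      HilbertDominated QX QY u c → HilbertDominated QX QY u (K * U + c / 2) := by
  have hM : 0 ≤ C * (QY.k ^ 2 * (2 * QY.k ^ 2 * L)) := by positivity
  obtain ⟨K, N, τ, hK, hN, hτ0, hτ1, hle⟩ := exists_parameters_le hM QY.k_pos
  refine ⟨K, hK, fun u U c hU hc hbdd ⟨B, hsymm, hlower, hupper⟩ => ?_⟩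
  have hb := QX.map_le_mul_envelope hsymm hlower hc hupper hU hbdd hN
  refine (hX.opTypeTwo hsymm hlower hc hupper hb hτ0 hτ1).hilbertDominated hC hY
    ((le_of_eq ?_).trans (hle U c hU hc))
  ring

-- The infimum of the admissible constants is attained, and halving it is only possible up to `K U`.
lemma RademacherLifting.exists_hilbertDominated_mul (hX : RademacherLifting QX L) (hL : 0 ≤ L)
    (hY : CotypeTwo QY C) (hC : 0 ≤ C) :
    ∃ K, 0 ≤ K ∧ ∀ (u : X →ₗ[ℝ] Y) (U : ℝ), 0 ≤ U → OpBoundedBy QX.q QY.q u U →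
      (∃ c, HilbertDominated QX QY u c) → HilbertDominated QX QY u (K * U) := by
  obtain ⟨K, hK, hhalf⟩ := hX.exists_hilbertDominated_half hL hY hC
  refine ⟨2 * K, by positivity, fun u U hU hbdd ⟨c, hu⟩ => ?_⟩
  set S : Set ℝ := Set.Ici 0 ∩ {c | HilbertDominated QX QY u c}
  have hne : S.Nonempty := ⟨|c|, abs_nonneg c, hu.mono (sq_abs c).ge⟩
  have hbelow : BddBelow S := ⟨0, fun _ hc => hc.1⟩
  obtain ⟨hinf0, hinf⟩ : sInf S ∈ S :=
    (isClosed_Ici.inter isClosed_setOf_hilbertDominated).csInf_mem hne hbelow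
  rw [Set.mem_Ici] at hinf0
  have hle : sInf S ≤ K * U + sInf S / 2 :=
    csInf_le hbelow ⟨by simp only [Set.mem_Ici]; positivity, hhalf u U _ hU hinf0 hbdd hinf⟩
  exact hinf.mono (pow_le_pow_left₀ hinf0 (by linarith) 2)

end APriori

section StrongApproximation

variable {X Y : Type*} [AddCommGroup X] [Module ℝ X] [AddCommGroup Y] [Module ℝ Y]
  {QX : QuasiNormOn X} {QY : QuasiNormOn Y} {u w : X →ₗ[ℝ] Y}

lemma IsBddOp.add (hu : IsBddOp QX.q QY.q u) (hw : IsBddOp QX.q QY.q w) :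
    IsBddOp QX.q QY.q (u + w) := by
  obtain ⟨M, hM, hu⟩ := hu
  obtain ⟨N, hN, hw⟩ := hw
  have hk := QY.k_pos.le
  refine ⟨QY.k * (M + N), by positivity, fun x => ?_⟩
  calc QY.q (u x + w x) ≤ QY.k * (QY.q (u x) + QY.q (w x)) := QY.tri _ _
    _ ≤ QY.k * (M * QX.q x + N * QX.q x) := by
        gcongr
        · exact hu x
        · exact hw x
    _ = QY.k * (M + N) * QX.q x := by ring

lemma IsBddOp.smul (hu : IsBddOp QX.q QY.q u) (a : ℝ) : IsBddOp QX.q QY.q (a • u) := by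
  obtain ⟨M, hM, hu⟩ := hu
  refine ⟨|a| * M, by positivity, fun x => ?_⟩
  rw [LinearMap.smul_apply, QY.smul_eq, mul_assoc]
  exact mul_le_mul_of_nonneg_left (hu x) (abs_nonneg a)

lemma HilbertDominated.add {c d : ℝ} (hu : HilbertDominated QX QY u c)
    (hw : HilbertDominated QX QY w d) :
    HilbertDominated QX QY (u + w) √(2 * QY.k ^ 2 * (c ^ 2 + d ^ 2)) := by
  obtain ⟨B, hsymm, hlower, hupper⟩ := hu
  obtain ⟨B', hsymm', hlower', hupper'⟩ := hw
  refine ⟨(2 * QY.k ^ 2) • (B + B'), (hsymm.add hsymm').smul _, fun x => ?_, fun x => ?_⟩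
  · calc QY.q (u x + w x) ^ 2 ≤ 2 * QY.k ^ 2 * (QY.q (u x) ^ 2 + QY.q (w x) ^ 2) :=
          QY.sq_add_le _ _
      _ ≤ 2 * QY.k ^ 2 * (B x x + B' x x) := by
          gcongr
          · exact hlower x
          · exact hlower' x
  · rw [Real.sq_sqrt (by positivity)]
    calc 2 * QY.k ^ 2 * (B x x + B' x x)
        ≤ 2 * QY.k ^ 2 * (c ^ 2 * QX.q x ^ 2 + d ^ 2 * QX.q x ^ 2) := by
          gcongr
          · exact hupper x
          · exact hupper' x
      _ = 2 * QY.k ^ 2 * (c ^ 2 + d ^ 2) * QX.q x ^ 2 := by ring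

lemma HilbertDominated.smul {c : ℝ} (hu : HilbertDominated QX QY u c) (a : ℝ) :
    HilbertDominated QX QY (a • u) (a * c) := by
  obtain ⟨B, hsymm, hlower, hupper⟩ := hu
  refine ⟨a ^ 2 • B, hsymm.smul _, fun x => ?_, fun x => ?_⟩
  · rw [LinearMap.smul_apply, QY.map_smul_sq]
    exact mul_le_mul_of_nonneg_left (hlower x) (sq_nonneg a)
  · rw [mul_pow, mul_assoc]
    exact mul_le_mul_of_nonneg_left (hupper x) (sq_nonneg a)

lemma QuasiNormOn.exists_norm_le_of_injective (Q : QuasiNormOn Y) {ι : Type*} [Fintype ι]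
    {φ : EuclideanSpace ℝ ι →ₗ[ℝ] Y} (hφ : Function.Injective φ) :
    ∃ m, 0 ≤ m ∧ ∀ a, ‖a‖ ≤ m * Q.q (φ a) := by
  obtain ⟨M, hM, hφM⟩ := Q.exists_le_norm_of_euclidean φ
  obtain ⟨F, hF, hlower, hupper⟩ := Q.exists_continuous_between φ.toAddMonoidHom hM hφM
  have hpos (a : EuclideanSpace ℝ ι) (ha : ‖a‖ = 1) : 0 < F a := by
    refine ((Q.nonneg _).lt_of_ne' fun h => ?_).trans_le (hlower a)
    have ha0 : a = 0 := hφ (((Q.eq_zero_iff _).1 h).trans φ.map_zero.symm)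
    simp [ha0] at ha
  obtain ⟨m, hm⟩ : ∃ m, ∀ a ∈ Metric.sphere (0 : EuclideanSpace ℝ ι) 1, (F a)⁻¹ ≤ m := by
    refine ((isCompact_sphere _ _).bddAbove_image (hF.continuousOn.inv₀ fun a ha => ?_)).imp
      fun m hm a ha => hm ⟨a, ha, rfl⟩
    exact (hpos a (mem_sphere_zero_iff_norm.1 ha)).ne'
  have hsphere (a : EuclideanSpace ℝ ι) (ha : ‖a‖ = 1) : 1 ≤ max m 0 * (Q.k * Q.q (φ a)) :=
    calc 1 = (F a)⁻¹ * F a := (inv_mul_cancel₀ (hpos a ha).ne').symm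
      _ ≤ max m 0 * (Q.k * Q.q (φ a)) := by
          gcongr
          · exact (hpos a ha).le
          · exact (hm a (mem_sphere_zero_iff_norm.2 ha)).trans (le_max_left _ _)
          · exact hupper a
  refine ⟨max m 0 * Q.k, mul_nonneg (le_max_right _ _) Q.k_pos.le, fun a => ?_⟩
  rcases eq_or_ne a 0 with rfl | ha
  · simp [Q.map_zero]
  · have hscale := hsphere (‖a‖⁻¹ • a) (norm_smul_inv_norm (𝕜 := ℝ) ha)
    rw [map_smul, Q.smul_eq, abs_inv, abs_norm] at hscale
    calc ‖a‖ = 1 * ‖a‖ := (one_mul _).symm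
      _ ≤ max m 0 * (Q.k * (‖a‖⁻¹ * Q.q (φ a))) * ‖a‖ := by gcongr
      _ = max m 0 * Q.k * Q.q (φ a) := by field_simp

lemma HilbertDominated.of_factorization {E : Type*} [NormedAddCommGroup E]
    [InnerProductSpace ℝ E] {A : X →ₗ[ℝ] E} {φ : E →ₗ[ℝ] Y} {M N : ℝ}
    (hA : ∀ x, ‖A x‖ ≤ N * QX.q x) (hφ : ∀ a, QY.q (φ a) ≤ M * ‖a‖) :
    HilbertDominated QX QY (φ ∘ₗ A) (M * N) := by
  refine ⟨M ^ 2 • (innerₗ E).compl₁₂ A A, ⟨fun x y => ?_⟩, fun x => ?_, fun x => ?_⟩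
  · simp [real_inner_comm]
  · calc QY.q (φ (A x)) ^ 2 ≤ (M * ‖A x‖) ^ 2 := pow_le_pow_left₀ (QY.nonneg _) (hφ _) 2
      _ = M ^ 2 * inner ℝ (A x) (A x) := by rw [real_inner_self_eq_norm_sq, mul_pow]
  · calc M ^ 2 * inner ℝ (A x) (A x) = M ^ 2 * ‖A x‖ ^ 2 := by rw [real_inner_self_eq_norm_sq]
      _ ≤ M ^ 2 * (N * QX.q x) ^ 2 := by gcongr; exact hA x
      _ = (M * N) ^ 2 * QX.q x ^ 2 := by ring

lemma IsBddOp.exists_hilbertDominated_of_finite_range (hu : IsBddOp QX.q QY.q u)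
    [Module.Finite ℝ (LinearMap.range u)] : ∃ c, HilbertDominated QX QY u c := by
  obtain ⟨U, -, hU⟩ := hu
  let e : LinearMap.range u ≃ₗ[ℝ] EuclideanSpace ℝ (Fin (Module.finrank ℝ (LinearMap.range u))) :=
    LinearEquiv.ofFinrankEq _ _ finrank_euclideanSpace_fin.symm
  let φ := (LinearMap.range u).subtype ∘ₗ e.symm.toLinearMap
  let A := e.toLinearMap ∘ₗ u.rangeRestrict
  have hφA : φ ∘ₗ A = u := by ext x; simp [φ, A]
  obtain ⟨m, hm, hlower⟩ := QY.exists_norm_le_of_injective (φ := φ)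
    ((LinearMap.range u).injective_subtype.comp e.symm.injective)
  obtain ⟨M, -, hupper⟩ := QY.exists_le_norm_of_euclidean φ
  have hA (x : X) : ‖A x‖ ≤ m * U * QX.q x := by
    calc ‖A x‖ ≤ m * QY.q ((φ ∘ₗ A) x) := hlower _
      _ ≤ m * (U * QX.q x) := by rw [hφA]; exact mul_le_mul_of_nonneg_left (hU x) hm
      _ = m * U * QX.q x := (mul_assoc _ _ _).symm
  exact ⟨M * (m * U), hφA ▸ HilbertDominated.of_factorization hA hupper⟩

section PointwiseLimit

variable {α : Type*} {l : Filter α} [l.NeBot] {v : α → X →ₗ[ℝ] Y}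

lemma OpBoundedBy.of_tendsto {U : ℝ} (hv : ∀ᶠ i in l, OpBoundedBy QX.q QY.q (v i) U)
    (hlim : ∀ x, Filter.Tendsto (fun i => QY.q (v i x - u x)) l (nhds 0)) :
    OpBoundedBy QX.q QY.q u (QY.k * U) := by
  intro x
  have ht := ((hlim x).const_add (U * QX.q x)).const_mul QY.k
  rw [add_zero, ← mul_assoc] at ht
  refine ge_of_tendsto ht (hv.mono fun i hi => ?_)
  calc QY.q (u x) = QY.q (v i x + (u x - v i x)) := by rw [add_sub_cancel]
    _ ≤ QY.k * (QY.q (v i x) + QY.q (u x - v i x)) := QY.tri _ _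
    _ ≤ QY.k * (U * QX.q x + QY.q (v i x - u x)) := by
        rw [QY.map_sub_comm]
        exact mul_le_mul_of_nonneg_left (add_le_add_left (hi x) _) QY.k_pos.le

lemma HilbertDominated.of_tendsto {c : ℝ} (hv : ∀ᶠ i in l, HilbertDominated QX QY (v i) c)
    (hlim : ∀ x, Filter.Tendsto (fun i => QY.q (v i x - u x)) l (nhds 0)) :
    HilbertDominated QX QY u (√2 * QY.k * c) := by
  refine hilbertDominated_iff.2 fun n x y hxy => ?_
  have ht := ((tendsto_finsetSum Finset.univ fun j _ => (hlim (y j)).pow 2).const_add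
    (c ^ 2 * ∑ j, QX.q (x j) ^ 2)).const_mul (2 * QY.k ^ 2)
  have hconst : 2 * QY.k ^ 2 * (c ^ 2 * ∑ j, QX.q (x j) ^ 2 + ∑ _j : Fin n, (0 : ℝ) ^ 2) =
      (√2 * QY.k * c) ^ 2 * ∑ j, QX.q (x j) ^ 2 := by
    simp only [mul_pow, Real.sq_sqrt zero_le_two, ne_eq, OfNat.ofNat_ne_zero, not_false_eq_true,
      zero_pow, Finset.sum_const_zero]
    ring
  rw [hconst] at ht
  refine ge_of_tendsto ht (hv.mono fun i hi => ?_)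
  calc ∑ j, QY.q (u (y j)) ^ 2
      ≤ ∑ j, 2 * QY.k ^ 2 * (QY.q (v i (y j)) ^ 2 + QY.q (v i (y j) - u (y j)) ^ 2) := by
        refine Finset.sum_le_sum fun j _ => ?_
        have h := QY.sq_add_le (v i (y j)) (u (y j) - v i (y j))
        rwa [add_sub_cancel, QY.map_sub_comm] at h
    _ = 2 * QY.k ^ 2 * (∑ j, QY.q (v i (y j)) ^ 2 + ∑ j, QY.q (v i (y j) - u (y j)) ^ 2) := by
        rw [← Finset.mul_sum, Finset.sum_add_distrib]
    _ ≤ 2 * QY.k ^ 2 * (c ^ 2 * ∑ j, QX.q (x j) ^ 2 + ∑ j, QY.q (v i (y j) - u (y j)) ^ 2) := by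
        gcongr
        exact hilbertDominated_iff.1 hi n x y hxy

end PointwiseLimit

lemma netClosed_setOf_exists_hilbertDominated {K : ℝ}
    (hK : ∀ (w : X →ₗ[ℝ] Y) (U : ℝ), 0 ≤ U → OpBoundedBy QX.q QY.q w U →
      (∃ c, HilbertDominated QX QY w c) → HilbertDominated QX QY w (K * U)) :
    NetClosed QX.q QY.q {w | IsBddOp QX.q QY.q w ∧ ∃ c, HilbertDominated QX QY w c} := by
  intro l hl hS ⟨M, hM⟩ u hlim
  have hU : ∀ᶠ w in l, OpBoundedBy QX.q QY.q w (max M 0) := hM.mono fun w hw x =>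
    (hw x).trans (mul_le_mul_of_nonneg_right (le_max_left _ _) (QX.nonneg x))
  refine ⟨⟨QY.k * max M 0, mul_nonneg QY.k_pos.le (le_max_right _ _), .of_tendsto hU hlim⟩,
    _, .of_tendsto (c := K * max M 0) ?_ hlim⟩
  filter_upwards [hU, hS] with w hw hwS using hK w _ (le_max_right _ _) hw hwS.2

lemma StronglyApproximable.isBddOp_and_exists_hilbertDominated {K : ℝ}
    (hK : ∀ (w : X →ₗ[ℝ] Y) (U : ℝ), 0 ≤ U → OpBoundedBy QX.q QY.q w U →
      (∃ c, HilbertDominated QX QY w c) → HilbertDominated QX QY w (K * U))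
    (hu : StronglyApproximable QX.q QY.q u) :
    IsBddOp QX.q QY.q u ∧ ∃ c, HilbertDominated QX QY u c := by
  refine hu {w | IsBddOp QX.q QY.q w ∧ ∃ c, HilbertDominated QX QY w c} (fun _ hw => hw.1)
    ?_ ?_ ?_ (netClosed_setOf_exists_hilbertDominated hK)
  · rintro w w' ⟨hw, c, hc⟩ ⟨hw', c', hc'⟩
    exact ⟨hw.add hw', _, hc.add hc'⟩
  · rintro a w ⟨hw, c, hc⟩
    exact ⟨hw.smul a, _, hc.smul a⟩
  · intro w hw _
    exact ⟨hw, hw.exists_hilbertDominated_of_finite_range⟩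

end StrongApproximation

section Factorization

variable {X : Type uX} {Y : Type*} [AddCommGroup X] [Module ℝ X] [AddCommGroup Y] [Module ℝ Y]

lemma exists_denseRange_norm_sq_eq {B : LinearMap.BilinForm ℝ X} (hB : B.IsSymm)
    (hnonneg : ∀ x, 0 ≤ B x x) :
    ∃ (ι : Type uX) (w : X →ₗ[ℝ] lp (fun _ : ι => ℝ) 2),
      (∀ x, ‖w x‖ ^ 2 = B x x) ∧ DenseRange w := by
  let core : PreInnerProductSpace.Core ℝ X :=
    { inner := fun x y => B x y
      conj_inner_symm := fun x y => hB.eq y x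
      re_inner_nonneg := hnonneg
      add_left := fun x y z => by simp
      smul_left := fun x y r => by simp }
  let : SeminormedAddCommGroup X := @InnerProductSpace.Core.toSeminormedAddCommGroup ℝ X _ _ _ core
  let : InnerProductSpace ℝ X := InnerProductSpace.ofCore core
  obtain ⟨ι, b, -⟩ := exists_hilbertBasis ℝ (UniformSpace.Completion X)
  refine ⟨ι, b.repr.toLinearEquiv.toLinearMap ∘ₗ
    (UniformSpace.Completion.toComplL (𝕜 := ℝ) (E := X)).toLinearMap, fun x => ?_, ?_⟩
  · calc ‖b.repr (x : UniformSpace.Completion X)‖ ^ 2 = ‖x‖ ^ 2 := by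
          rw [b.repr.norm_map, UniformSpace.Completion.norm_coe]
      _ = B x x := (real_inner_self_eq_norm_sq x).symm
  · exact b.repr.surjective.denseRange.comp UniformSpace.Completion.denseRange_coe
      b.repr.continuous

section Extension

variable {H : Type*} [NormedAddCommGroup H] [NormedSpace ℝ H] {Q : QuasiNormOn Y}
  {w : X →ₗ[ℝ] H} {u : X →ₗ[ℝ] Y} {h h' : H} {y y' : Y}

/-- `y` is a value at `h` of the extension of `w x ↦ u x` by limits of sequences; uniqueness of this
value is `IsLimitExtension.unique`. -/
def IsLimitExtension (Q : QuasiNormOn Y) (w : X →ₗ[ℝ] H) (u : X →ₗ[ℝ] Y) (h : H) (y : Y) : Prop :=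
  ∃ x : ℕ → X, Filter.Tendsto (fun n => w (x n)) Filter.atTop (nhds h) ∧
    Filter.Tendsto (fun n => Q.q (u (x n) - y)) Filter.atTop (nhds 0)

lemma isLimitExtension_apply (x : X) : IsLimitExtension Q w u (w x) (u x) :=
  ⟨fun _ => x, tendsto_const_nhds, by simp only [sub_self, Q.map_zero, tendsto_const_nhds]⟩

lemma IsLimitExtension.add (hy : IsLimitExtension Q w u h y)
    (hy' : IsLimitExtension Q w u h' y') : IsLimitExtension Q w u (h + h') (y + y') := by
  obtain ⟨x, hx, hxy⟩ := hy
  obtain ⟨x', hx', hxy'⟩ := hy'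
  refine ⟨fun n => x n + x' n, by simpa only [map_add] using hx.add hx', ?_⟩
  have ht := (hxy.add hxy').const_mul Q.k
  rw [add_zero, mul_zero] at ht
  refine squeeze_zero (fun n => Q.nonneg _) (fun n => ?_) ht
  rw [map_add, add_sub_add_comm]
  exact Q.tri _ _

lemma IsLimitExtension.smul (hy : IsLimitExtension Q w u h y) (a : ℝ) :
    IsLimitExtension Q w u (a • h) (a • y) := by
  obtain ⟨x, hx, hxy⟩ := hy
  refine ⟨fun n => a • x n, by simpa only [map_smul] using hx.const_smul a, ?_⟩
  simpa only [map_smul, ← smul_sub, Q.smul_eq, mul_zero] using hxy.const_mul |a|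

lemma IsLimitExtension.le_mul_norm (hy : IsLimitExtension Q w u h y)
    (hu : ∀ x, Q.q (u x) ≤ ‖w x‖) : Q.q y ≤ Q.k * ‖h‖ := by
  obtain ⟨x, hx, hxy⟩ := hy
  have ht := (hx.norm.add hxy).const_mul Q.k
  rw [add_zero] at ht
  refine ge_of_tendsto' ht fun n => ?_
  calc Q.q y = Q.q (u (x n) + (y - u (x n))) := by rw [add_sub_cancel]
    _ ≤ Q.k * (Q.q (u (x n)) + Q.q (y - u (x n))) := Q.tri _ _
    _ ≤ Q.k * (‖w (x n)‖ + Q.q (u (x n) - y)) := by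
        rw [Q.map_sub_comm]
        exact mul_le_mul_of_nonneg_left (add_le_add_left (hu _) _) Q.k_pos.le

lemma IsLimitExtension.unique (hy : IsLimitExtension Q w u h y)
    (hy' : IsLimitExtension Q w u h y') (hu : ∀ x, Q.q (u x) ≤ ‖w x‖) : y = y' := by
  have hle := (hy.add (hy'.smul (-1))).le_mul_norm hu
  rw [neg_one_smul, neg_one_smul, add_neg_cancel, norm_zero, mul_zero] at hle
  exact add_neg_eq_zero.1 ((Q.eq_zero_iff _).1 (hle.antisymm (Q.nonneg _)))

lemma CauchyComplete.exists_isLimitExtension (hY : CauchyComplete Q.q)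
    (hu : ∀ x, Q.q (u x) ≤ ‖w x‖) (hw : DenseRange w) (h : H) :
    ∃ y, IsLimitExtension Q w u h y := by
  obtain ⟨z, hz, hzh⟩ := mem_closure_iff_seq_limit.1 (hw h)
  choose x hx using hz
  obtain rfl : (fun n => w (x n)) = z := funext hx
  obtain ⟨y, hy⟩ := hY (fun n => u (x n)) fun ε hε => by
    obtain ⟨N, hN⟩ := Metric.cauchySeq_iff.1 hzh.cauchySeq ε hε
    refine ⟨N, fun m hm n hn => ?_⟩
    calc Q.q (u (x m) - u (x n)) ≤ ‖w (x m) - w (x n)‖ := by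
          rw [← map_sub, ← map_sub]
          exact hu _
      _ < ε := by simpa only [dist_eq_norm] using hN m hm n hn
  refine ⟨y, x, hzh, Metric.tendsto_atTop.2 fun ε hε => (hy ε hε).imp fun N hN n hn => ?_⟩
  rw [Real.dist_0_eq_abs, abs_of_nonneg (Q.nonneg _)]
  exact hN n hn

lemma CauchyComplete.exists_extension (hY : CauchyComplete Q.q) (hu : ∀ x, Q.q (u x) ≤ ‖w x‖)
    (hw : DenseRange w) :
    ∃ v : H →ₗ[ℝ] Y, (∀ h, Q.q (v h) ≤ Q.k * ‖h‖) ∧ ∀ x, v (w x) = u x := by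
  choose v hv using hY.exists_isLimitExtension hu hw
  let vₗ : H →ₗ[ℝ] Y :=
    { toFun := v
      map_add' := fun h h' => (hv _).unique ((hv h).add (hv h')) hu
      map_smul' := fun a h => (hv _).unique ((hv h).smul a) hu }
  exact ⟨vₗ, fun h => (hv h).le_mul_norm hu, fun x => (hv _).unique (isLimitExtension_apply x) hu⟩

end Extension

variable {QX : QuasiNormOn X} {QY : QuasiNormOn Y} {u : X →ₗ[ℝ] Y}

lemma HilbertDominated.gamma2Le {c : ℝ} (h : HilbertDominated QX QY u c) (hc : 0 ≤ c)
    (hY : CauchyComplete QY.q) : Gamma2Le QX.q QY.q u (QY.k * c) := by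
  obtain ⟨B, hsymm, hlower, hupper⟩ := h
  obtain ⟨ι, w, hw, hdense⟩ :=
    exists_denseRange_norm_sq_eq hsymm fun x => (sq_nonneg _).trans (hlower x)
  obtain ⟨v, hv, hvw⟩ := hY.exists_extension (w := w) (u := u)
    (fun x => le_of_sq_le_sq (by rw [hw]; exact hlower x) (norm_nonneg _)) hdense
  refine ⟨ι, w, v, c, QY.k, hc, QY.k_pos.le, fun x => ?_, hv, hvw, le_rfl⟩
  refine le_of_sq_le_sq ?_ (mul_nonneg hc (QX.nonneg _))
  rw [hw, mul_pow]
  exact hupper x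

lemma Gamma2Le.mono {c d : ℝ} (h : Gamma2Le QX.q QY.q u c) (hcd : c ≤ d) :
    Gamma2Le QX.q QY.q u d := by
  obtain ⟨ι, w, v, Cw, Cv, hCw, hCv, hw, hv, hvw, hc⟩ := h
  exact ⟨ι, w, v, Cw, Cv, hCw, hCv, hw, hv, hvw, hc.trans hcd⟩

lemma IsBddOp.opBoundedBy_opQNorm (hu : IsBddOp QX.q QY.q u) :
    0 ≤ opQNorm QX.q QY.q u ∧ OpBoundedBy QX.q QY.q u (opQNorm QX.q QY.q u) :=
  sInf_bound_mem hu

end Factorization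

theorem abstract_grothendieck_quasiBanach_general {X : Type uX} {Y : Type uY}
    [AddCommGroup X] [Module ℝ X] [AddCommGroup Y] [Module ℝ Y]
    (QX : QuasiNormOn X) (QY : QuasiNormOn Y) (hYcomplete : CauchyComplete QY.q)
    (hdual : DualHasCotype2 QX.q) (hcotY : HasCotype QY.q 2) :
    ∃ C > (0 : ℝ), ∀ u : X →ₗ[ℝ] Y, StronglyApproximable QX.q QY.q u →
      Gamma2Le QX.q QY.q u (C * opQNorm QX.q QY.q u) := by
  obtain ⟨L, hL, hX⟩ := hdual.exists_dualCotypeTwo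
  obtain ⟨D, hD, hY⟩ := hcotY.exists_cotypeTwo
  obtain ⟨K, hK, hapriori⟩ :=
    (hX.rademacherLifting hL).exists_hilbertDominated_mul (by positivity) hY hD.le
  have hk := QY.k_pos
  refine ⟨QY.k * K + 1, by positivity, fun u hu => ?_⟩
  obtain ⟨hbdd, hdom⟩ := hu.isBddOp_and_exists_hilbertDominated hapriori
  obtain ⟨hnonneg, hnorm⟩ := hbdd.opBoundedBy_opQNorm
  refine ((hapriori u _ hnonneg hnorm hdom).gamma2Le (by positivity) hYcomplete).mono ?_
  linarith

/-- **Abstract Grothendieck theorem for quasi-Banach spaces** (Theorem 6).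
If `X, Y` are quasi-Banach spaces such that `X*` and `Y` have cotype 2, then there is a
constant `C` such that every strongly approximable bounded operator `u : X → Y` satisfies
`γ₂(u) ≤ C ‖u‖`; in particular `u` factors through a Hilbert space. -/
theorem abstract_grothendieck_quasiBanach
    {X : Type uX} {Y : Type uY} [AddCommGroup X] [Module ℝ X] [AddCommGroup Y] [Module ℝ Y]
    (QX : QuasiNormOn X) (QY : QuasiNormOn Y)
    (hXcomplete : CauchyComplete QX.q) (hYcomplete : CauchyComplete QY.q)
    (hdual : DualHasCotype2 QX.q) (hcotY : HasCotype QY.q 2) :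
    ∃ C > (0:ℝ), ∀ u : X →ₗ[ℝ] Y, IsBddOp QX.q QY.q u →
      StronglyApproximable QX.q QY.q u →
      ∀ ε > (0:ℝ), Gamma2Le QX.q QY.q u (C * opQNorm QX.q QY.q u + ε) := by
  obtain ⟨C, hC, h⟩ := abstract_grothendieck_quasiBanach_general QX QY hYcomplete hdual hcotY
  exact ⟨C, hC, fun u _ hu ε hε => (h u hu).mono (le_add_of_nonneg_right hε.le)⟩
end

section
/- Let X be a quasi-Banach space of cotype q < ∞, let (Ω, μ) be a probability measure space, and let 0 < s ≤ 2. Then the space Z = L_s(μ, X) of X-valued s-integrable functions, with quasi-norm ‖f‖ = (∫ ‖f(ω)‖_X^s dμ)^{1/s}, has cotype q, with cotype q constant depending only on X, s and q. -/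
open scoped ENNReal NNReal BigOperators

universe uX uY uZ uW uE uO uG uV

/-!
By cotype and the Kahane–Khintchine inequality, `(∑ ‖xᵢ‖ᵖ)^(1/p)` is at most a constant times the
`L_s`-average of `‖∑ εᵢ xᵢ‖`. Apply this pointwise to `fᵢ(ω)` and take `L_s(μ)`-quasi-norms: as
`s ≤ p`, Minkowski's inequality bounds the left side below by `(∑ ‖fᵢ‖ᵖ)^(1/p)`, while on the right
the two `L_s`-averages commute, and the resulting `L_s`-average over signs is at most the
`L_p`-average.

Kahane–Khintchine for quasi-norms is obtained without convexity: a Lévy maximal inequality and a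
first-passage argument (Hoffmann-Jørgensen) show that a threshold which a Rademacher sum exceeds
with small enough probability controls the mean; Markov's inequality supplies the threshold.
-/

section SignWalk

variable {G : Type*} [AddCommGroup G]

/-- The mean of `F (v + ∑ ± x)` over all choices of signs, one for each entry `x` of the list: the
expectation of `F` at the end of the symmetric random walk from `v` with the listed steps. -/
noncomputable def walkMean (F : G → ℝ) : List G → G → ℝ
  | [], v => F v
  | x :: l, v => (walkMean F l (v + x) + walkMean F l (v - x)) / 2

open Classical in
/-- The probability that the symmetric random walk from `v` with the listed steps is in `A` at some
time, the starting and end points included. -/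
noncomputable def visitProb (A : Set G) : List G → G → ℝ
  | [], v => if v ∈ A then 1 else 0
  | x :: l, v => if v ∈ A then 1 else (visitProb A l (v + x) + visitProb A l (v - x)) / 2

theorem walkMean_mono {F₁ F₂ : G → ℝ} (h : ∀ w, F₁ w ≤ F₂ w) (l : List G) (v : G) :
    walkMean F₁ l v ≤ walkMean F₂ l v := by
  induction l generalizing v with
  | nil => exact h v
  | cons x l ih => simp only [walkMean]; linarith [ih (v + x), ih (v - x)]

theorem walkMean_add (F₁ F₂ : G → ℝ) (l : List G) (v : G) :
    walkMean (fun w => F₁ w + F₂ w) l v = walkMean F₁ l v + walkMean F₂ l v := by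
  induction l generalizing v with
  | nil => rfl
  | cons x l ih => simp only [walkMean, ih]; ring

theorem walkMean_const_mul (c : ℝ) (F : G → ℝ) (l : List G) (v : G) :
    walkMean (fun w => c * F w) l v = c * walkMean F l v := by
  induction l generalizing v with
  | nil => rfl
  | cons x l ih => simp only [walkMean, ih]; ring

theorem walkMean_const (c : ℝ) (l : List G) (v : G) : walkMean (fun _ => c) l v = c := by
  induction l generalizing v with
  | nil => rfl
  | cons x l ih => simp only [walkMean, ih]; ring

theorem walkMean_nonneg {F : G → ℝ} (hF : ∀ w, 0 ≤ F w) (l : List G) (v : G) :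
    0 ≤ walkMean F l v := by
  simpa only [walkMean_const] using walkMean_mono hF l v

theorem walkMean_comp_const_add (F : G → ℝ) (u : G) (l : List G) (v : G) :
    walkMean (fun w => F (u + w)) l v = walkMean F l (u + v) := by
  induction l generalizing v with
  | nil => rfl
  | cons x l ih => simp only [walkMean, ih, add_assoc, add_sub_assoc]

theorem walkMean_comp_neg (F : G → ℝ) (l : List G) (v : G) :
    walkMean (fun w => F (-w)) l v = walkMean F l (-v) := by
  induction l generalizing v with
  | nil => rfl
  | cons x l ih =>
    simp only [walkMean, ih, neg_add', neg_sub', sub_neg_eq_add]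
    ring

theorem walkMean_comp_const_sub (F : G → ℝ) (u : G) (l : List G) (v : G) :
    walkMean (fun w => F (u - w)) l v = walkMean F l (u - v) := by
  simpa only [walkMean_comp_const_add, ← sub_eq_add_neg] using
    walkMean_comp_neg (fun w => F (u + w)) l v

theorem walkMean_add_add_sub (F : G → ℝ) (l : List G) (v : G) :
    walkMean (fun w => F (v + w) + F (v - w)) l 0 = 2 * walkMean F l v := by
  rw [walkMean_add, walkMean_comp_const_add, walkMean_comp_const_sub, add_zero, sub_zero, two_mul]

theorem walkMean_indicator_lt_le {F : G → ℝ} (hF : ∀ w, 0 ≤ F w) {t θ : ℝ} (ht : 0 < t)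
    (hθ : 0 ≤ θ) (l : List G) (v : G) :
    walkMean ({w | t < F w}.indicator 1) l v ≤ (t ^ θ)⁻¹ * walkMean (fun w => F w ^ θ) l v := by
  rw [← walkMean_const_mul]
  refine walkMean_mono (Set.indicator_le' (fun w hw => ?_) fun w _ => ?_) l v
  · rw [Pi.one_apply, ← div_eq_inv_mul, one_le_div (by positivity)]
    exact Real.rpow_le_rpow ht.le (le_of_lt hw) hθ
  · exact mul_nonneg (by positivity) (Real.rpow_nonneg (hF w) θ)

theorem visitProb_of_mem {A : Set G} {v : G} (hv : v ∈ A) (l : List G) : visitProb A l v = 1 := by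
  cases l <;> simp only [visitProb, if_pos hv]

theorem one_le_two_mul_walkMean_indicator {B : Set G} {v : G}
    (hB : ∀ w, v + w ∈ B ∨ v - w ∈ B) (l : List G) : 1 ≤ 2 * walkMean (B.indicator 1) l v := by
  have hle : ∀ w, (1 : ℝ) ≤ B.indicator 1 (v + w) + B.indicator 1 (v - w) := fun w => by
    have hnonneg : ∀ u, (0 : ℝ) ≤ B.indicator 1 u :=
      Set.indicator_nonneg fun _ _ => zero_le_one
    rcases hB w with h | h <;> rw [Set.indicator_of_mem h, Pi.one_apply] <;>
      linarith [hnonneg (v + w), hnonneg (v - w)]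
  simpa only [walkMean_const, walkMean_add_add_sub] using walkMean_mono hle l 0

/-- **Lévy's maximal inequality**. -/
theorem visitProb_le_two_mul_walkMean_indicator {A B : Set G}
    (hAB : ∀ v ∈ A, ∀ w, v + w ∈ B ∨ v - w ∈ B) (l : List G) (v : G) :
    visitProb A l v ≤ 2 * walkMean (B.indicator 1) l v := by
  induction l generalizing v with
  | nil =>
    by_cases hv : v ∈ A
    · rw [visitProb_of_mem hv]
      exact one_le_two_mul_walkMean_indicator (hAB v hv) []
    · simp only [visitProb, if_neg hv, walkMean]
      exact mul_nonneg zero_le_two (Set.indicator_nonneg (fun _ _ => zero_le_one) v)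
  | cons x l ih =>
    by_cases hv : v ∈ A
    · rw [visitProb_of_mem hv]
      exact one_le_two_mul_walkMean_indicator (hAB v hv) (x :: l)
    · simp only [visitProb, if_neg hv, walkMean]
      linarith [ih (v + x), ih (v - x)]

end SignWalk

section QuasiGauge

variable {G : Type*} [AddCommGroup G]

/-- The properties of `F = ‖·‖ᵖ`, for a quasi-norm `‖·‖` and `p > 0`, that the comparison of its
moments along a random walk relies on. They mention no scalars: on an abelian group, monotonicity
under doubling stands in for homogeneity. -/
structure IsQuasiGauge (F : G → ℝ) (c : ℝ) : Prop where
  map_zero : F 0 = 0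
  map_neg : ∀ x, F (-x) = F x
  le_map_add_self : ∀ x, F x ≤ F (x + x)
  one_le : 1 ≤ c
  map_add_le : ∀ x y, F (x + y) ≤ c * (F x + F y)

namespace IsQuasiGauge

variable {F : G → ℝ} {c : ℝ}

theorem nonneg (hF : IsQuasiGauge F c) (x : G) : 0 ≤ F x := by
  have h := hF.map_add_le x (-x)
  rw [add_neg_cancel, hF.map_zero, hF.map_neg] at h
  linarith [nonneg_of_mul_nonneg_right h (zero_lt_one.trans_le hF.one_le)]

theorem le_mul_add_add_sub (hF : IsQuasiGauge F c) (v w : G) :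
    F v ≤ c * (F (v + w) + F (v - w)) :=
  calc F v ≤ F (v + v) := hF.le_map_add_self v
    _ = F ((v + w) + (v - w)) := by rw [add_add_sub_cancel]
    _ ≤ c * (F (v + w) + F (v - w)) := hF.map_add_le _ _

theorem walkMean_neg (hF : IsQuasiGauge F c) (l : List G) (v : G) :
    walkMean F l (-v) = walkMean F l v := by
  simpa only [hF.map_neg] using (walkMean_comp_neg F l v).symm

theorem walkMean_add_le (hF : IsQuasiGauge F c) (l : List G) (v x : G) :
    walkMean F l (v + x) ≤ c * (F v + walkMean F l x) := by
  simpa only [walkMean_comp_const_add, walkMean_const_mul, walkMean_add, walkMean_const] using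
    walkMean_mono (hF.map_add_le v) l x

theorem walkMean_zero_le (hF : IsQuasiGauge F c) (l : List G) (v : G) :
    walkMean F l 0 ≤ 2 * c * walkMean F l v := by
  have hle : ∀ w, F w ≤ c * (F (v + w) + F (v - w)) := fun w => by
    simpa only [add_comm w v, ← hF.map_neg (w - v), neg_sub] using hF.le_mul_add_add_sub w v
  have h := walkMean_mono hle l 0
  rw [walkMean_const_mul, walkMean_add_add_sub] at h
  linarith

theorem walkMean_zero_le_of_suffix (hF : IsQuasiGauge F c) {l' l : List G} (h : l' <:+ l) (v : G) :
    walkMean F l' 0 ≤ 2 * c * walkMean F l v := by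
  obtain ⟨r, rfl⟩ := h
  induction r generalizing v with
  | nil => exact hF.walkMean_zero_le l' v
  | cons x r ih =>
    simp only [List.cons_append, walkMean]
    linarith [ih (v + x), ih (v - x)]

/-- A **Hoffmann-Jørgensen inequality**: when the walk first passes above `T`, the steps still to be
taken form a suffix of the list, and their mean contribution is at most `B`. -/
theorem walkMean_le_mul_add_visitProb_mul (hF : IsQuasiGauge F c) {T B : ℝ} {l : List G}
    (hB : ∀ l', l' <:+ l → walkMean F l' 0 ≤ B) {v : G} (hv : F v ≤ T) :
    walkMean F l v ≤ c * (T + visitProb {w | T < F w} l v * B) := by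
  have hc : 0 ≤ c := zero_le_one.trans hF.one_le
  induction l generalizing v with
  | nil =>
    have hT : 0 ≤ T := (hF.nonneg v).trans hv
    simp only [walkMean, visitProb, Set.mem_ofPred_eq, if_neg hv.not_gt, zero_mul, add_zero]
    exact hv.trans (le_mul_of_one_le_left hT hF.one_le)
  | cons x l ih =>
    have hx : walkMean F l x ≤ B := by
      have h := hB (x :: l) (List.suffix_refl _)
      simp only [walkMean, zero_add, zero_sub, hF.walkMean_neg] at h
      linarith
    have hstep : ∀ y, walkMean F l y ≤ B →
        walkMean F l (v + y) ≤ c * (T + visitProb {w | T < F w} l (v + y) * B) := fun y hy => by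
      by_cases hvy : T < F (v + y)
      · rw [visitProb_of_mem (A := {w | T < F w}) hvy, one_mul]
        exact (hF.walkMean_add_le l v y).trans (by gcongr)
      · exact ih (fun l' hl' => hB l' (hl'.trans (List.suffix_cons x l))) (not_lt.1 hvy)
    have hpos := hstep x hx
    have hneg := hstep (-x) (by rwa [hF.walkMean_neg])
    rw [← sub_eq_add_neg] at hneg
    simp only [walkMean, visitProb, Set.mem_ofPred_eq, if_neg hv.not_gt]
    linarith

theorem walkMean_zero_le_of_walkMean_indicator_le (hF : IsQuasiGauge F c) {t : ℝ} (ht : 0 ≤ t)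
    {l : List G} (htail : walkMean ({w | t < F w}.indicator 1) l 0 ≤ (8 * c ^ 2)⁻¹) :
    walkMean F l 0 ≤ 4 * c ^ 2 * t := by
  have hc : 0 < c := zero_lt_one.trans_le hF.one_le
  have hE : 0 ≤ walkMean F l 0 := walkMean_nonneg hF.nonneg l 0
  have hvisit : visitProb {w | 2 * c * t < F w} l 0 ≤ (4 * c ^ 2)⁻¹ := by
    have hsplit : ∀ v ∈ {w | 2 * c * t < F w}, ∀ w,
        v + w ∈ {w | t < F w} ∨ v - w ∈ {w | t < F w} := fun v (hv : 2 * c * t < F v) w => by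
      by_contra! h
      simp only [Set.mem_ofPred_eq, not_lt] at h
      nlinarith [hF.le_mul_add_add_sub v w]
    calc visitProb {w | 2 * c * t < F w} l 0
        ≤ 2 * walkMean ({w | t < F w}.indicator 1) l 0 :=
          visitProb_le_two_mul_walkMean_indicator hsplit l 0
      _ ≤ 2 * (8 * c ^ 2)⁻¹ := by gcongr
      _ = (4 * c ^ 2)⁻¹ := by field_simp; norm_num
  have hself : walkMean F l 0 ≤ 2 * c ^ 2 * t + walkMean F l 0 / 2 :=
    calc walkMean F l 0
        ≤ c * (2 * c * t + visitProb {w | 2 * c * t < F w} l 0 * (2 * c * walkMean F l 0)) :=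
          hF.walkMean_le_mul_add_visitProb_mul
            (fun l' hl' => hF.walkMean_zero_le_of_suffix hl' 0) (by rw [hF.map_zero]; positivity)
      _ ≤ c * (2 * c * t + (4 * c ^ 2)⁻¹ * (2 * c * walkMean F l 0)) := by gcongr
      _ = 2 * c ^ 2 * t + walkMean F l 0 / 2 := by field_simp; ring
  linarith

/-- The **Kahane–Khintchine inequality**. -/
theorem walkMean_zero_le_mul_rpow (hF : IsQuasiGauge F c) {θ : ℝ} (hθ : 0 < θ) (l : List G) :
    walkMean F l 0 ≤ 4 * c ^ 2 * (8 * c ^ 2 * walkMean (fun w => F w ^ θ) l 0) ^ (1 / θ) := by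
  have hc : 0 < c := zero_lt_one.trans_le hF.one_le
  set m := walkMean (fun w => F w ^ θ) l 0
  have hm : 0 ≤ m := walkMean_nonneg (fun w => Real.rpow_nonneg (hF.nonneg w) θ) l 0
  rw [← div_le_iff₀' (by positivity)]
  refine le_of_forall_gt_imp_ge_of_dense fun t ht => ?_
  have ht0 : 0 < t := (by positivity : (0 : ℝ) ≤ _).trans_lt ht
  have htθ : 8 * c ^ 2 * m ≤ t ^ θ := by
    rw [one_div] at ht
    exact ((Real.rpow_inv_lt_iff_of_pos (by positivity) ht0.le hθ).1 ht).le
  rw [div_le_iff₀' (by positivity)]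
  refine hF.walkMean_zero_le_of_walkMean_indicator_le ht0.le ?_
  calc walkMean ({w | t < F w}.indicator 1) l 0
      ≤ (t ^ θ)⁻¹ * m := walkMean_indicator_lt_le hF.nonneg ht0 hθ.le l 0
    _ ≤ (8 * c ^ 2)⁻¹ := by
      rw [inv_mul_le_iff₀ (by positivity), ← div_eq_mul_inv, le_div_iff₀' (by positivity)]
      exact htθ

end IsQuasiGauge

end QuasiGauge

section KahaneKhintchine

theorem rpow_rpow_div {a s : ℝ} (ha : 0 ≤ a) (hs : s ≠ 0) (p : ℝ) : (a ^ s) ^ (p / s) = a ^ p := by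
  rw [← Real.rpow_mul ha, mul_div_cancel₀ p hs]

theorem rpow_div_rpow_one_div {a p : ℝ} (ha : 0 ≤ a) (hp : p ≠ 0) (s : ℝ) :
    (a ^ (p / s)) ^ (1 / p) = a ^ (1 / s) := by
  rw [← Real.rpow_mul ha, div_mul_div_comm, mul_one, mul_comm s p, ← div_div, div_self hp]

theorem sum_rpow_nonneg {ι : Type*} [Fintype ι] {a : ι → ℝ} (ha : ∀ i, 0 ≤ a i) (p : ℝ) :
    0 ≤ ∑ i, a i ^ p :=
  Finset.sum_nonneg fun i _ => Real.rpow_nonneg (ha i) p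

theorem add_rpow_le_two_rpow_mul {a b p : ℝ} (ha : 0 ≤ a) (hb : 0 ≤ b) (hp : 0 ≤ p) :
    (a + b) ^ p ≤ 2 ^ p * (a ^ p + b ^ p) := by
  wlog hab : a ≤ b generalizing a b
  · simpa only [add_comm] using this hb ha (le_of_not_ge hab)
  calc (a + b) ^ p ≤ (2 * b) ^ p := by gcongr; linarith
    _ = 2 ^ p * b ^ p := Real.mul_rpow zero_le_two hb
    _ ≤ 2 ^ p * (a ^ p + b ^ p) := by gcongr; exact le_add_of_nonneg_left (by positivity)

variable {X : Type*} [AddCommGroup X] [Module ℝ X]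

theorem radAvg_nonneg {q : X → ℝ} (hq : ∀ x, 0 ≤ q x) (p : ℝ) {n : ℕ} (x : Fin n → X) :
    0 ≤ radAvg q p x :=
  Real.rpow_nonneg (mul_nonneg (by positivity) (sum_rpow_nonneg (fun _ => hq _) p)) _

theorem walkMean_ofFn (F : X → ℝ) {n : ℕ} (x : Fin n → X) (v : X) :
    walkMean F (List.ofFn x) v =
      ((2 : ℝ) ^ n)⁻¹ * ∑ ε : Fin n → Bool, F (v + ∑ i, rsign (ε i) • x i) := by
  induction n generalizing v with
  | zero => simp [walkMean]
  | succ n ih =>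
    rw [List.ofFn_succ]
    simp only [walkMean]
    rw [ih, ih, ← (Fin.consEquiv fun _ => Bool).sum_comp, Fintype.sum_prod_type]
    simp only [Fintype.sum_bool, Fin.consEquiv_apply, Fin.sum_univ_succ, Fin.cons_zero,
      Fin.cons_succ, rsign, if_true, Bool.false_eq_true, if_false, one_smul, neg_smul,
      pow_succ, mul_inv, add_assoc, sub_eq_add_neg]
    ring

theorem radAvg_eq_walkMean_rpow (q : X → ℝ) (p : ℝ) {n : ℕ} (x : Fin n → X) :
    radAvg q p x = walkMean (fun w => q w ^ p) (List.ofFn x) 0 ^ (1 / p) := by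
  simp only [walkMean_ofFn, zero_add, radAvg]

theorem QuasiNormOn.isQuasiGauge_rpow (Q : QuasiNormOn X) {p : ℝ} (hp : 0 < p) :
    IsQuasiGauge (fun x => Q.q x ^ p) ((2 * Q.k) ^ p) where
  map_zero := by rw [(Q.eq_zero_iff 0).2 rfl, Real.zero_rpow hp.ne']
  map_neg x := by rw [← neg_one_smul ℝ x, Q.smul_eq, abs_neg, abs_one, one_mul]
  le_map_add_self x := by
    rw [← two_smul ℝ x, Q.smul_eq, abs_two]
    exact Real.rpow_le_rpow (Q.nonneg x) (by linarith [Q.nonneg x]) hp.le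
  one_le := Real.one_le_rpow (by linarith [Q.one_le_k]) hp.le
  map_add_le x y := by
    have hk : 0 ≤ Q.k := zero_le_one.trans Q.one_le_k
    have hx := Q.nonneg x
    have hy := Q.nonneg y
    calc Q.q (x + y) ^ p ≤ (Q.k * (Q.q x + Q.q y)) ^ p :=
          Real.rpow_le_rpow (Q.nonneg _) (Q.tri x y) hp.le
      _ = Q.k ^ p * (Q.q x + Q.q y) ^ p := Real.mul_rpow hk (by positivity)
      _ ≤ Q.k ^ p * (2 ^ p * (Q.q x ^ p + Q.q y ^ p)) := by
          gcongr; exact add_rpow_le_two_rpow_mul hx hy hp.le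
      _ = (2 * Q.k) ^ p * (Q.q x ^ p + Q.q y ^ p) := by
          rw [Real.mul_rpow zero_le_two hk]; ring

theorem QuasiNormOn.exists_radAvg_le_mul_radAvg (Q : QuasiNormOn X) {p s : ℝ} (hp : 0 < p)
    (hs : 0 < s) :
    ∃ K > (0 : ℝ), ∀ (n : ℕ) (x : Fin n → X), radAvg Q.q p x ≤ K * radAvg Q.q s x := by
  have hk : 0 < Q.k := zero_lt_one.trans_le Q.one_le_k
  set c := (2 * Q.k) ^ p
  refine ⟨(4 * c ^ 2 * (8 * c ^ 2) ^ (p / s)) ^ (1 / p), by positivity, fun n x => ?_⟩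
  have h := (Q.isQuasiGauge_rpow hp).walkMean_zero_le_mul_rpow (div_pos hs hp) (List.ofFn x)
  simp only [rpow_rpow_div (Q.nonneg _) hp.ne', one_div_div] at h
  have hE : 0 ≤ walkMean (fun w => Q.q w ^ p) (List.ofFn x) 0 :=
    walkMean_nonneg (fun w => Real.rpow_nonneg (Q.nonneg w) p) _ 0
  rw [radAvg_eq_walkMean_rpow, radAvg_eq_walkMean_rpow]
  set m := walkMean (fun w => Q.q w ^ s) (List.ofFn x) 0
  have hm : 0 ≤ m := walkMean_nonneg (fun w => Real.rpow_nonneg (Q.nonneg w) s) _ 0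
  calc walkMean (fun w => Q.q w ^ p) (List.ofFn x) 0 ^ (1 / p)
      ≤ (4 * c ^ 2 * (8 * c ^ 2 * m) ^ (p / s)) ^ (1 / p) :=
        Real.rpow_le_rpow hE h (by positivity)
    _ = (4 * c ^ 2 * (8 * c ^ 2) ^ (p / s)) ^ (1 / p) * m ^ (1 / s) := by
        rw [Real.mul_rpow (by positivity) hm, ← mul_assoc,
          Real.mul_rpow (by positivity) (by positivity), rpow_div_rpow_one_div hm hp.ne']

theorem QuasiNormOn.exists_sum_rpow_le_mul_radAvg (Q : QuasiNormOn X) {p s : ℝ}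
    (hQ : HasCotype Q.q p) (hp : 0 < p) (hs : 0 < s) :
    ∃ C > (0 : ℝ), ∀ (n : ℕ) (x : Fin n → X),
      (∑ i, Q.q (x i) ^ p) ^ (1 / p) ≤ C * radAvg Q.q s x := by
  obtain ⟨C, hC, hcot⟩ := hQ
  obtain ⟨K, hK, hkahane⟩ := Q.exists_radAvg_le_mul_radAvg hp hs
  refine ⟨C * K, mul_pos hC hK, fun n x => (hcot n x).trans ?_⟩
  rw [mul_assoc]
  exact mul_le_mul_of_nonneg_left (hkahane n x) hC.le

theorem radAvg_le_radAvg_of_exponent_le {q : X → ℝ} (hq : ∀ x, 0 ≤ q x) {s p : ℝ} (hs : 0 < s)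
    (hsp : s ≤ p) {n : ℕ} (x : Fin n → X) : radAvg q s x ≤ radAvg q p x := by
  have hp : 0 < p := hs.trans_le hsp
  set S : (Fin n → Bool) → X := fun ε => ∑ i, rsign (ε i) • x i
  have hmean_nonneg : 0 ≤ ((2 : ℝ) ^ n)⁻¹ * ∑ ε, q (S ε) ^ s :=
    mul_nonneg (by positivity) (sum_rpow_nonneg (fun _ => hq _) s)
  have hjensen :
      (((2 : ℝ) ^ n)⁻¹ * ∑ ε, q (S ε) ^ s) ^ (p / s) ≤ ((2 : ℝ) ^ n)⁻¹ * ∑ ε, q (S ε) ^ p := by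
    have h := Real.rpow_arith_mean_le_arith_mean_rpow Finset.univ
      (fun _ : Fin n → Bool => ((2 : ℝ) ^ n)⁻¹) (fun ε => q (S ε) ^ s) (fun _ _ => by positivity)
      (by simp) (fun ε _ => Real.rpow_nonneg (hq _) s) ((one_le_div hs).2 hsp)
    simpa only [← Finset.mul_sum, rpow_rpow_div (hq _) hs.ne'] using h
  calc radAvg q s x = ((((2 : ℝ) ^ n)⁻¹ * ∑ ε, q (S ε) ^ s) ^ (p / s)) ^ (1 / p) := by
        rw [rpow_div_rpow_one_div hmean_nonneg hp.ne', radAvg]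
    _ ≤ radAvg q p x :=
        Real.rpow_le_rpow (Real.rpow_nonneg hmean_nonneg _) hjensen (by positivity)

end KahaneKhintchine

section LsSpace

open MeasureTheory

theorem sum_norm_integral_rpow_le {Ω ι E : Type*} [MeasurableSpace Ω] {μ : Measure Ω} [Fintype ι]
    [NormedAddCommGroup E] [NormedSpace ℝ E] [CompleteSpace E] {g : ι → Ω → E}
    (hg : ∀ i, Integrable (g i) μ) {r : ℝ} (hr : 1 ≤ r) :
    (∑ i, ‖∫ ω, g i ω ∂μ‖ ^ r) ^ (1 / r) ≤ ∫ ω, (∑ i, ‖g i ω‖ ^ r) ^ (1 / r) ∂μ := by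
  have hr0 : 0 < r := zero_lt_one.trans_le hr
  have : Fact (1 ≤ ENNReal.ofReal r) := ⟨ENNReal.one_le_ofReal.2 hr⟩
  have hnorm : ∀ v : PiLp (ENNReal.ofReal r) fun _ : ι => E,
      ‖v‖ = (∑ i, ‖v i‖ ^ r) ^ (1 / r) := fun v => by
    rw [PiLp.norm_eq_sum (by rwa [ENNReal.toReal_ofReal hr0.le]), ENNReal.toReal_ofReal hr0.le]
  let h : Ω → PiLp (ENNReal.ofReal r) fun _ : ι => E := fun ω => WithLp.toLp _ fun i => g i ω
  have hle := norm_integral_le_integral_norm (μ := μ) h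
  simpa only [hnorm, eval_integral_piLp (f := h) hg] using hle

/-- The `L_s(μ)`-quasi-norm `(∫ q(f)ˢ dμ)^(1/s)` of a function with values in a space quasi-normed
by `q`. It has the junk value `0` when `q(f)ˢ` is not integrable. -/
noncomputable def lsQuasiNorm {Ω X : Type*} [MeasurableSpace Ω] (q : X → ℝ) (s : ℝ) (μ : Measure Ω)
    (f : Ω → X) : ℝ :=
  (∫ ω, q (f ω) ^ s ∂μ) ^ (1 / s)

variable {Ω X : Type*} [MeasurableSpace Ω] {μ : Measure Ω} {q : X → ℝ} {s : ℝ}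

theorem integral_rpow_nonneg (hq : ∀ x, 0 ≤ q x) (f : Ω → X) : 0 ≤ ∫ ω, q (f ω) ^ s ∂μ :=
  integral_nonneg fun ω => Real.rpow_nonneg (hq (f ω)) s

theorem lsQuasiNorm_nonneg (hq : ∀ x, 0 ≤ q x) (f : Ω → X) : 0 ≤ lsQuasiNorm q s μ f :=
  Real.rpow_nonneg (integral_rpow_nonneg hq f) _

theorem lsQuasiNorm_rpow (hq : ∀ x, 0 ≤ q x) (hs : s ≠ 0) (f : Ω → X) :
    lsQuasiNorm q s μ f ^ s = ∫ ω, q (f ω) ^ s ∂μ := by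
  rw [lsQuasiNorm, one_div, Real.rpow_inv_rpow (integral_rpow_nonneg hq f) hs]

theorem lsQuasiNorm_le_mul {q₁ q₂ : X → ℝ} (hq₁ : ∀ x, 0 ≤ q₁ x) (hq₂ : ∀ x, 0 ≤ q₂ x) (hs : 0 < s)
    {C : ℝ} (hC : 0 ≤ C) (hle : ∀ x, q₁ x ≤ C * q₂ x) {f : Ω → X}
    (hf : Integrable (fun ω => q₂ (f ω) ^ s) μ) :
    lsQuasiNorm q₁ s μ f ≤ C * lsQuasiNorm q₂ s μ f := by
  have hpoint : ∀ ω, q₁ (f ω) ^ s ≤ C ^ s * q₂ (f ω) ^ s := fun ω => by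
    rw [← Real.mul_rpow hC (hq₂ _)]
    exact Real.rpow_le_rpow (hq₁ _) (hle _) hs.le
  have hint : ∫ ω, q₁ (f ω) ^ s ∂μ ≤ C ^ s * ∫ ω, q₂ (f ω) ^ s ∂μ := by
    rw [← integral_const_mul]
    exact integral_mono_of_nonneg (.of_forall fun ω => Real.rpow_nonneg (hq₁ _) s)
      (hf.const_mul _) (.of_forall hpoint)
  rw [← lsQuasiNorm_rpow hq₁ hs.ne', ← lsQuasiNorm_rpow hq₂ hs.ne',
    ← Real.mul_rpow hC (lsQuasiNorm_nonneg hq₂ f)] at hint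
  exact (Real.rpow_le_rpow_iff (lsQuasiNorm_nonneg hq₁ f)
    (mul_nonneg hC (lsQuasiNorm_nonneg hq₂ f)) hs).1 hint

/-- **Minkowski's inequality** `‖(fᵢ)‖_{ℓ_p(L_s)} ≤ ‖(fᵢ)‖_{L_s(ℓ_p)}` for `s ≤ p`. -/
theorem sum_lsQuasiNorm_rpow_le {ι : Type*} [Fintype ι] (hq : ∀ x, 0 ≤ q x) {p : ℝ} (hs : 0 < s)
    (hsp : s ≤ p) {f : ι → Ω → X} (hf : ∀ i, Integrable (fun ω => q (f i ω) ^ s) μ) :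
    (∑ i, lsQuasiNorm q s μ (f i) ^ p) ^ (1 / p) ≤
      lsQuasiNorm (fun x : ι → X => (∑ i, q (x i) ^ p) ^ (1 / p)) s μ (fun ω i => f i ω) := by
  have hroot : ∀ a : ι → ℝ, (∀ i, 0 ≤ a i) →
      (∑ i, a i ^ p) ^ (1 / (p / s)) = ((∑ i, a i ^ p) ^ (1 / p)) ^ s := fun a ha => by
    rw [← Real.rpow_mul (sum_rpow_nonneg ha p), one_div_div, div_mul_eq_mul_div, one_mul]
  have hL : ∀ i, 0 ≤ lsQuasiNorm q s μ (f i) := fun i => lsQuasiNorm_nonneg hq (f i)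
  have hmink : ((∑ i, lsQuasiNorm q s μ (f i) ^ p) ^ (1 / p)) ^ s ≤
      ∫ ω, ((∑ i, q (f i ω) ^ p) ^ (1 / p)) ^ s ∂μ := by
    have h := sum_norm_integral_rpow_le hf ((one_le_div hs).2 hsp)
    simp only [← lsQuasiNorm_rpow hq hs.ne', Real.norm_of_nonneg (Real.rpow_nonneg (hL _) s),
      Real.norm_of_nonneg (Real.rpow_nonneg (hq _) s), rpow_rpow_div (hL _) hs.ne',
      rpow_rpow_div (hq _) hs.ne'] at h
    simpa only [hroot _ hL, hroot _ fun i => hq (f i _)] using h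
  have hlp : ∀ a : ι → ℝ, (∀ i, 0 ≤ a i) → 0 ≤ (∑ i, a i ^ p) ^ (1 / p) := fun a ha =>
    Real.rpow_nonneg (sum_rpow_nonneg ha p) _
  rw [lsQuasiNorm, one_div s, Real.le_rpow_inv_iff_of_pos (hlp _ hL)
    (integral_nonneg fun ω => Real.rpow_nonneg (hlp _ fun i => hq (f i ω)) s) hs]
  exact hmink

variable [AddCommGroup X] [Module ℝ X]

theorem radAvg_rpow (hq : ∀ x, 0 ≤ q x) (hs : s ≠ 0) {n : ℕ} (x : Fin n → X) :
    radAvg q s x ^ s =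
      ((2 : ℝ) ^ n)⁻¹ * ∑ ε : Fin n → Bool, q (∑ i, rsign (ε i) • x i) ^ s := by
  rw [radAvg, one_div, Real.rpow_inv_rpow
    (mul_nonneg (by positivity) (sum_rpow_nonneg (fun _ => hq _) s)) hs]

theorem integrable_radAvg_rpow (hq : ∀ x, 0 ≤ q x) (hs : s ≠ 0) {n : ℕ} {f : Fin n → Ω → X}
    (hf : ∀ ε : Fin n → Bool, Integrable (fun ω => q (∑ i, rsign (ε i) • f i ω) ^ s) μ) :
    Integrable (fun ω => radAvg q s (fun i => f i ω) ^ s) μ := by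
  simp only [radAvg_rpow hq hs]
  exact (integrable_finsetSum _ fun ε _ => hf ε).const_mul _

theorem lsQuasiNorm_radAvg (hq : ∀ x, 0 ≤ q x) (hs : s ≠ 0) {n : ℕ} {f : Fin n → Ω → X}
    (hf : ∀ ε : Fin n → Bool, Integrable (fun ω => q (∑ i, rsign (ε i) • f i ω) ^ s) μ) :
    lsQuasiNorm (radAvg q s) s μ (fun ω i => f i ω) = radAvg (lsQuasiNorm q s μ) s f := by
  rw [lsQuasiNorm, radAvg]
  simp only [radAvg_rpow hq hs, lsQuasiNorm_rpow hq hs, Finset.sum_apply, Pi.smul_apply]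
  rw [integral_const_mul, integral_finsetSum _ fun ε _ => hf ε]

theorem Ls_space_has_cotype_general (Q : QuasiNormOn X) {p : ℝ} (hQ : HasCotype Q.q p)
    (hs : 0 < s) (hsp : s ≤ p) :
    ∃ C > (0 : ℝ), ∀ (Ω : Type uO) (_ : MeasurableSpace Ω) (μ : Measure Ω) (n : ℕ)
      (f : Fin n → Ω → X), (∀ c : Fin n → ℝ, Integrable (fun ω => Q.q (∑ i, c i • f i ω) ^ s) μ) →
      (∑ i, lsQuasiNorm Q.q s μ (f i) ^ p) ^ (1 / p) ≤
        C * radAvg (lsQuasiNorm Q.q s μ) p f := by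
  obtain ⟨C, hC, hcot⟩ := Q.exists_sum_rpow_le_mul_radAvg hQ (hs.trans_le hsp) hs
  refine ⟨C, hC, fun Ω _ μ n f hf => ?_⟩
  have hfi : ∀ i, Integrable (fun ω => Q.q (f i ω) ^ s) μ := fun i => by
    simpa [Pi.single_apply, ite_smul] using hf (Pi.single i 1)
  have hsigns : ∀ ε : Fin n → Bool,
      Integrable (fun ω => Q.q (∑ i, rsign (ε i) • f i ω) ^ s) μ := fun ε => hf _
  have hlp : ∀ x : Fin n → X, 0 ≤ (∑ i, Q.q (x i) ^ p) ^ (1 / p) := fun x =>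
    Real.rpow_nonneg (sum_rpow_nonneg (fun i => Q.nonneg (x i)) p) _
  have hint := integrable_radAvg_rpow Q.nonneg hs.ne' hsigns
  calc (∑ i, lsQuasiNorm Q.q s μ (f i) ^ p) ^ (1 / p)
      ≤ lsQuasiNorm (fun x : Fin n → X => (∑ i, Q.q (x i) ^ p) ^ (1 / p)) s μ (fun ω i => f i ω) :=
        sum_lsQuasiNorm_rpow_le Q.nonneg hs hsp hfi
    _ ≤ C * lsQuasiNorm (radAvg Q.q s) s μ (fun ω i => f i ω) :=
        lsQuasiNorm_le_mul hlp (radAvg_nonneg Q.nonneg s) hs hC.le (hcot n) hint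
    _ = C * radAvg (lsQuasiNorm Q.q s μ) s f := by rw [lsQuasiNorm_radAvg Q.nonneg hs.ne' hsigns]
    _ ≤ C * radAvg (lsQuasiNorm Q.q s μ) p f :=
        mul_le_mul_of_nonneg_left
          (radAvg_le_radAvg_of_exponent_le (lsQuasiNorm_nonneg Q.nonneg) hs hsp f) hC.le

end LsSpace

/-- If `X` has cotype `q < ∞` and `(Ω,μ)` is a probability space and `0 < s ≤ 2`, then
`L_s(μ,X)` has cotype `q`, with constant depending only on `X`, `s`, `q`. -/
theorem Ls_space_has_cotype
    {X : Type uX} [AddCommGroup X] [Module ℝ X] (QX : QuasiNormOn X)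
    (hXcomplete : CauchyComplete QX.q)
    (qc cX : ℝ) (hqc : 2 ≤ qc) (hcX : 0 < cX) (hcot : CotypeConstLe QX.q qc cX)
    (s : ℝ) (hs0 : 0 < s) (hs2 : s ≤ 2) :
    ∃ C > (0:ℝ), ∀ (Ω : Type uO) (_ : MeasurableSpace Ω) (μ : MeasureTheory.Measure Ω),
      MeasureTheory.IsProbabilityMeasure μ →
      ∀ (n : ℕ) (f : Fin n → Ω → X),
      (∀ c : Fin n → ℝ,
        MeasureTheory.Integrable (fun ω => QX.q (∑ i, c i • f i ω) ^ s) μ) →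
      (∑ i, ((∫ ω, QX.q (f i ω) ^ s ∂μ) ^ (1/s)) ^ qc) ^ (1/qc) ≤
        C * ((((2:ℝ) ^ n)⁻¹ * ∑ ε : Fin n → Bool,
          ((∫ ω, QX.q (∑ i, rsign (ε i) • f i ω) ^ s ∂μ) ^ (1/s)) ^ qc) ^ (1/qc)) := by
  obtain ⟨C, hC, h⟩ := Ls_space_has_cotype_general QX ⟨cX, hcX, hcot⟩ hs0 (hs2.trans hqc)
  refine ⟨C, hC, fun Ω _ μ _ n f hf => ?_⟩
  simpa only [lsQuasiNorm, radAvg, Finset.sum_apply, Pi.smul_apply] using h Ω _ μ n f hf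
end
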